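/- arXiv:2403.04728 — 8 statements merged into one kernel-verified Lean document; each statement's English description precedes it below -/
import Mathlib

section
/- Let t ≥ 1 be a positive integer, let ε > 0, and let A be a zero-one matrix in which every row contains at most t one-entries. Then there is a constant C (depending on A, t and ε) such that for every positive integer n, ex(n, A) ≤ C · n^{2 − 1/t + ε}. -/
/-- A zero-one matrix `M` (with rows `Fin m`, columns `Fin n`) contains a zero-one matrix `A`
if there are strictly increasing injections of rows and columns such that every 1-entry of `A`
corresponds to a 1-entry of `M`. -/
def matContains {m n a b : ℕ} (M : Fin m → Fin n → Bool) (A : Fin a → Fin b → Bool) : Prop :=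
  ∃ f : Fin a → Fin m, ∃ g : Fin b → Fin n, StrictMono f ∧ StrictMono g ∧
    ∀ i j, A i j = true → M (f i) (g j) = true

/-- The weight of a zero-one matrix: its number of 1-entries. -/
def matWeight {m n : ℕ} (M : Fin m → Fin n → Bool) : ℕ :=
  (Finset.univ.filter fun p : Fin m × Fin n => M p.1 p.2 = true).card

/-- The extremal number `ex(n, A)`: the maximum weight of an `n × n` zero-one matrix
not containing `A`. -/
noncomputable def matEx {a b : ℕ} (n : ℕ) (A : Fin a → Fin b → Bool) : ℕ :=
  sSup {w : ℕ | ∃ M : Fin n → Fin n → Bool, ¬ matContains M A ∧ matWeight M = w}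

open Finset

theorem aux_scales (m : ℕ) (hm : 2 ≤ m) (J : Finset ℕ) : ∀ X : Finset ℕ,
    (∀ x ∈ X, ∀ y ∈ X, x < y → Nat.log m (y - x) ∈ J) → X.card ≤ m ^ J.card := by
  induction J using Finset.induction_on_max with
  | empty =>
    intro X h
    simp only [card_empty, pow_zero]
    rw [Finset.card_le_one]
    intro x hx y hy
    by_contra hne
    rcases lt_or_gt_of_ne hne with h1 | h1
    · simpa using h x hx y hy h1
    · simpa using h y hy x hx h1
  | insert a J hJ ih =>
    intro X h
    have haJ : a ∉ J := fun h => lt_irrefl _ (hJ a h)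
    rw [card_insert_of_notMem haJ, pow_succ]
    rcases X.eq_empty_or_nonempty with rfl | hne
    · simp
    set x0 := X.min' hne with hx0
    have hx0m : x0 ∈ X := X.min'_mem hne
    have hmin : ∀ x ∈ X, x0 ≤ x := fun x hx => X.min'_le x hx
    have hle : ∀ j ∈ insert a J, j ≤ a := by
      intro j hj
      rcases mem_insert.1 hj with rfl | hj
      · exact le_rfl
      · exact (hJ j hj).le
    have hpos : 0 < m ^ a := by positivity
    have hmap : ∀ x ∈ X, (x - x0) / m ^ a ∈ range m := by
      intro x hx
      rw [mem_range, Nat.div_lt_iff_lt_mul hpos, ← pow_succ']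
      rcases (hmin x hx).eq_or_lt with h1 | h1
      · rw [← h1, Nat.sub_self]; positivity
      · have h2 := hle _ (h x0 hx0m x hx h1)
        exact Nat.lt_pow_of_log_lt (by omega) (by omega)
    have := Finset.card_le_mul_card_image_of_maps_to hmap (m ^ J.card) (by
      intro q hq
      apply ih
      intro x hx y hy hxy
      rw [mem_filter] at hx hy
      have h1 := h x hx.1 y hy.1 hxy
      rcases mem_insert.1 h1 with h2 | h2
      · exfalso
        have h3 : m ^ a ≤ y - x := by
          rw [← h2]; exact Nat.pow_log_le_self m (by omega)
        have h4 : (x - x0) / m ^ a + 1 ≤ (y - x0) / m ^ a := by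
          rw [← Nat.add_div_right _ hpos]
          apply Nat.div_le_div_right
          have := hmin x hx.1
          omega
        omega
      · exact h2)
    simpa using this

theorem aux_ramsey {κ : Type} [DecidableEq κ] (S : Finset κ) (t : ℕ) : ∀ l : ℕ, ∃ N : ℕ,
    ∀ (α : Type) [LinearOrder α] (X : Finset α) (c : Finset α → κ), (∀ T, c T ∈ S) →
      N ≤ X.card → ∃ Q ⊆ X, Q.card = l ∧ ∃ k ∈ S, ∀ T ⊆ Q, T.card = t → c T = k := by
  induction t with
  | zero =>
    intro l
    refine ⟨l, fun α _ X c hc hX => ?_⟩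
    obtain ⟨Q, hQ, hl⟩ := exists_subset_card_eq hX
    refine ⟨Q, hQ, hl, c ∅, hc _, fun T _ hT => ?_⟩
    rw [card_eq_zero.1 hT]
  | succ t ih =>
    have key : ∀ s : ℕ, ∃ N : ℕ,
      ∀ (α : Type) [LinearOrder α] (X : Finset α) (c : Finset α → κ), (∀ T, c T ∈ S) →
        N ≤ X.card → ∃ Q ⊆ X, Q.card = s ∧ ∃ f : α → κ, (∀ x, f x ∈ S) ∧
          ∀ x ∈ Q, ∀ T ⊆ Q, T.card = t → (∀ y ∈ T, x < y) → c (insert x T) = f x := by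
      intro s
      induction s with
      | zero =>
        refine ⟨0, fun α _ X c hc _ => ⟨∅, by simp, by simp, fun _ => c ∅, fun _ => hc _, ?_⟩⟩
        simp
      | succ s ihs =>
        obtain ⟨N1, h1⟩ := ihs
        obtain ⟨N2, h2⟩ := ih (N1 + 1)
        refine ⟨N2 + 1, fun α _ X c hc hX => ?_⟩
        have hne : X.Nonempty := card_pos.1 (by omega)
        set x := X.min' hne
        have hxX : x ∈ X := X.min'_mem hne
        obtain ⟨Q, hQ, hQc, k, hkS, hk⟩ := h2 α (X.erase x) (fun T => c (insert x T))
          (fun T => hc _) (by rw [card_erase_of_mem hxX]; omega)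
        obtain ⟨Y, hY, hYc, f, hfS, hf⟩ := h1 α Q c hc (by omega)
        have hlt : ∀ y ∈ Y, x < y := by
          intro y hy
          have := hQ (hY hy)
          rw [mem_erase] at this
          exact lt_of_le_of_ne (X.min'_le y this.2) (Ne.symm this.1)
        have hxY : x ∉ Y := fun h => lt_irrefl _ (hlt x h)
        refine ⟨insert x Y, ?_, ?_, Function.update f x k, ?_, ?_⟩
        · intro y hy
          rcases mem_insert.1 hy with rfl | hy
          · exact hxX
          · exact mem_of_mem_erase (hQ (hY hy))
        · rw [card_insert_of_notMem hxY, hYc]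
        · intro y
          by_cases hy : y = x
          · subst hy; simpa using hkS
          · rw [Function.update_of_ne hy]; exact hfS y
        · intro y hy T hT hTc hyT
          have hxT : x ∉ T := by
            intro hx
            have h3 := hyT x hx
            rcases mem_insert.1 hy with h4 | h4
            · rw [h4] at h3; exact lt_irrefl _ h3
            · exact lt_asymm h3 (hlt y h4)
          have hTY : T ⊆ Y := by
            intro z hz
            rcases mem_insert.1 (hT hz) with h4 | h4
            · exact absurd (h4 ▸ hz) hxT
            · exact h4
          rcases mem_insert.1 hy with h4 | h4
          · rw [h4, Function.update_self]
            exact hk T (hTY.trans hY) hTc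
          · rw [Function.update_of_ne (hlt y h4).ne']
            exact hf y h4 T hTY hTc hyT
    intro l
    obtain ⟨N, hN⟩ := key (S.card * l + 1)
    refine ⟨N, fun α _ X c hc hX => ?_⟩
    obtain ⟨Q, hQ, hQc, f, hfS, hf⟩ := hN α X c hc hX
    obtain ⟨k, hk, hlt⟩ := exists_lt_card_fiber_of_mul_lt_card_of_maps_to
      (s := Q) (t := S) (f := f) (n := l) (fun x _ => hfS x) (by omega)
    obtain ⟨P, hP, hPc⟩ := exists_subset_card_eq hlt.le
    refine ⟨P, hP.trans ((filter_subset _ _).trans hQ), hPc, k, hk, fun T hT hTc => ?_⟩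
    have hne : T.Nonempty := card_pos.1 (by omega)
    have hm := T.min'_mem hne
    have hTQ : T ⊆ Q := hT.trans (hP.trans (filter_subset _ _))
    have := hf (T.min' hne) (hTQ hm) (T.erase (T.min' hne)) ((erase_subset _ _).trans hTQ)
      (by rw [card_erase_of_mem hm]; omega) (by
        intro y hy
        rw [mem_erase] at hy
        exact lt_of_le_of_ne (T.min'_le y hy.2) (Ne.symm hy.1))
    rw [insert_erase hm] at this
    rw [this]
    exact (mem_filter.1 (hP (hT hm))).2

theorem aux_cover {α : Type} [DecidableEq α] (N : Finset α) (t R : ℕ) (B : Finset (Finset α))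
    (hB : ∀ T ∈ B, T ⊆ N ∧ T.card = t) (htR : t ≤ R) (hR : R ≤ N.card)
    (h : ∀ P ⊆ N, P.card = R → ∃ T ∈ B, T ⊆ P) :
    N.card.choose t ≤ R.choose t * B.card := by
  have h1 : (powersetCard R N).card ≤ B.card * (N.card - t).choose (R - t) := by
    refine (card_le_card (t := B.biUnion fun T =>
      (powersetCard (R - t) (N \ T)).image (fun U => T ∪ U)) ?_).trans
      (card_biUnion_le_card_mul _ _ _ ?_)
    · intro P hP
      rw [mem_powersetCard] at hP
      obtain ⟨T, hT, hTP⟩ := h P hP.1 hP.2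
      rw [mem_biUnion]
      refine ⟨T, hT, mem_image.2 ⟨P \ T, ?_, union_sdiff_of_subset hTP⟩⟩
      rw [mem_powersetCard, card_sdiff_of_subset hTP, hP.2, (hB T hT).2]
      exact ⟨sdiff_subset_sdiff hP.1 le_rfl, rfl⟩
    · intro T hT
      refine card_image_le.trans ?_
      rw [card_powersetCard, card_sdiff_of_subset (hB T hT).1, (hB T hT).2]
  rw [card_powersetCard] at h1
  have h2 := Nat.choose_mul (n := N.card) (k := R) (s := t) htR
  have h3 : 0 < (N.card - t).choose (R - t) := Nat.choose_pos (by omega)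
  refine Nat.le_of_mul_le_mul_right (c := (N.card - t).choose (R - t)) ?_ h3
  rw [← h2, mul_comm (R.choose t), mul_right_comm]
  exact Nat.mul_le_mul_right _ h1

/-- rows above `r` that are common neighbours of `T`, recorded by scale -/
def auxJ {n : ℕ} (m : ℕ) (M : Fin n → Fin n → Bool) (r : Fin n) (T : Finset (Fin n)) : Finset ℕ :=
  (univ.filter fun s : Fin n => r < s ∧ ∀ c ∈ T, M s c = true).image
    fun s => Nat.log m (s.val - r.val)

theorem aux_contains {n a b t m : ℕ} (M : Fin n → Fin n → Bool) (A : Fin a → Fin b → Bool)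
    (hA : ∀ i : Fin a, (Finset.univ.filter fun j : Fin b => A i j = true).card ≤ t)
    (r : Fin n) (Q : Finset (Fin n)) (hQ : Q.card = b + t) (J : Finset ℕ) (hJ : a ≤ J.card)
    (h : ∀ T ⊆ Q, T.card = t → auxJ m M r T = J) : matContains M A := by
  let g : Fin b → Fin n := fun j => Q.orderEmbOfFin hQ (Fin.castLE (by omega) j)
  have hg : StrictMono g := by
    intro x y hxy
    apply (Q.orderEmbOfFin hQ).strictMono
    exact hxy
  let e : Fin a → ℕ := fun j => J.orderEmbOfFin rfl (Fin.castLE hJ j)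
  have he : StrictMono e := by
    intro x y hxy
    apply (J.orderEmbOfFin rfl).strictMono
    exact hxy
  have hex : ∀ i : Fin a, ∃ s : Fin n, r < s ∧ Nat.log m (s.val - r.val) = e i ∧
      ∀ j, A i j = true → M s (g j) = true := by
    intro i
    obtain ⟨T, hT1, hT2, hT3⟩ := exists_subsuperset_card_eq
      (s := (univ.filter fun j : Fin b => A i j = true).image g) (t := Q) (n := t)
      (by
        intro x hx
        obtain ⟨j, _, rfl⟩ := mem_image.1 hx
        exact orderEmbOfFin_mem _ _ _)
      (card_image_le.trans (hA i)) (by omega)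
    have hmem : e i ∈ auxJ m M r T := by
      rw [h T hT2 hT3]; exact orderEmbOfFin_mem _ _ _
    obtain ⟨s, hs, hse⟩ := mem_image.1 hmem
    rw [mem_filter] at hs
    refine ⟨s, hs.2.1, hse, fun j hj => hs.2.2 _ (hT1 (mem_image_of_mem _ ?_))⟩
    simpa using hj
  choose f hf1 hf2 hf3 using hex
  refine ⟨f, g, ?_, hg, hf3⟩
  intro i j hij
  have h1 := he hij
  rw [← hf2 i, ← hf2 j] at h1
  by_contra hcon
  rw [not_lt] at hcon
  have h2 : (f j).val - r.val ≤ (f i).val - r.val := Nat.sub_le_sub_right hcon _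
  exact absurd (Nat.log_mono_right (b := m) h2) (not_le.2 h1)

theorem aux_bad {n : ℕ} (a m L : ℕ) (hm : 2 ≤ m) (M : Fin n → Fin n → Bool)
    (hL : ∀ x, x < n → Nat.log m x < L) (T : Finset (Fin n)) :
    (univ.filter fun r : Fin n => (∀ c ∈ T, M r c = true) ∧ (auxJ m M r T).card < a).card
      ≤ m ^ a * 2 ^ L := by
  have := card_le_mul_card_image_of_maps_to
    (s := univ.filter fun r : Fin n => (∀ c ∈ T, M r c = true) ∧ (auxJ m M r T).card < a)
    (f := fun r => auxJ m M r T) (t := (range L).powerset) (by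
      intro r hr
      rw [mem_powerset]
      intro j hj
      obtain ⟨s, hs, rfl⟩ := mem_image.1 hj
      exact mem_range.2 (hL _ (by omega))) (m ^ a) (by
      intro J hJ
      rw [filter_filter]
      set X := univ.filter fun r : Fin n =>
        ((∀ c ∈ T, M r c = true) ∧ (auxJ m M r T).card < a) ∧ auxJ m M r T = J with hX
      rcases X.eq_empty_or_nonempty with h0 | ⟨r0, hr0⟩
      · rw [h0]; simp
      have hJa : J.card ≤ a := by
        have := (mem_filter.1 hr0).2
        exact this.2 ▸ this.1.2.le
      have h1 := aux_scales m hm J (X.map Fin.valEmbedding) (by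
        intro x hx y hy hxy
        obtain ⟨x, hx2, rfl⟩ := mem_map.1 hx
        obtain ⟨y, hy2, rfl⟩ := mem_map.1 hy
        have hxJ : auxJ m M x T = J := (mem_filter.1 hx2).2.2
        rw [← hxJ]
        refine mem_image.2 ⟨y, mem_filter.2 ⟨mem_univ _, hxy, (mem_filter.1 hy2).2.1.1⟩, rfl⟩)
      rw [card_map] at h1
      exact h1.trans (Nat.pow_le_pow_right (by omega) hJa))
  simpa using this

theorem aux_main (t : ℕ) (ht : 1 ≤ t) (a b L : ℕ) (A : Fin a → Fin b → Bool)
    (hA : ∀ i : Fin a, (Finset.univ.filter fun j : Fin b => A i j = true).card ≤ t) :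
    ∃ C : ℕ, 0 < C ∧ ∀ n m : ℕ, 0 < n → 2 ≤ m → (∀ x, x < n → Nat.log m x < L) →
      ∀ M : Fin n → Fin n → Bool, ¬ matContains M A →
        matWeight M ^ t ≤ C * n ^ (2 * t - 1) * m ^ a := by
  obtain ⟨N, hN⟩ := aux_ramsey (range L).powerset t (b + t)
  set R := N + 2 * t with hRdef
  set K := 2 ^ t * t.factorial * R.choose t with hK
  refine ⟨R ^ t + K * 2 ^ L, by positivity, fun n m hn hm hL M hM => ?_⟩
  let Nb : Fin n → Finset (Fin n) := fun r => univ.filter fun c => M r c = true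
  let Bad : Fin n → Finset (Finset (Fin n)) := fun r =>
    (powersetCard t univ).filter fun T => (∀ c ∈ T, M r c = true) ∧ (auxJ m M r T).card < a
  have hJL : ∀ r T, auxJ m M r T ∈ (range L).powerset := by
    intro r T
    rw [mem_powerset]
    intro j hj
    obtain ⟨s, hs, rfl⟩ := mem_image.1 hj
    exact mem_range.2 (hL _ (by omega))
  have hrow : ∀ r, (Nb r).card ^ t ≤ R ^ t + K * (Bad r).card := by
    intro r
    rcases lt_or_ge (Nb r).card R with hlt | hge
    · exact (Nat.pow_le_pow_left hlt.le t).trans (Nat.le_add_right _ _)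
    have h1 := aux_cover (Nb r) t R (Bad r) (by
      intro T hT
      rw [mem_filter, mem_powersetCard] at hT
      exact ⟨fun c hc => mem_filter.2 ⟨mem_univ _, hT.2.1 c hc⟩, hT.1.2⟩) (by omega) hge (by
      intro P hP hPc
      by_contra hcon
      push Not at hcon
      obtain ⟨Q, hQ, hQc, J, -, hJ⟩ := hN (Fin n) P (fun T => auxJ m M r T) (hJL r) (by omega)
      apply hM
      refine aux_contains (m := m) M A hA r Q hQc J ?_ hJ
      obtain ⟨T, hT, hTc⟩ := exists_subset_card_eq (s := Q) (n := t) (by omega)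
      rw [← hJ T hT hTc]
      by_contra hlt
      refine hcon T (mem_filter.2 ⟨mem_powersetCard.2 ⟨subset_univ _, hTc⟩, ?_, not_le.1 hlt⟩)
        (hT.trans hQ)
      intro c hc
      exact (mem_filter.1 (hP (hQ (hT hc)))).2)
    have h2 : (Nb r).card ≤ 2 * ((Nb r).card + 1 - t) := by omega
    calc (Nb r).card ^ t ≤ (2 * ((Nb r).card + 1 - t)) ^ t := Nat.pow_le_pow_left h2 t
      _ = 2 ^ t * ((Nb r).card + 1 - t) ^ t := mul_pow _ _ _
      _ ≤ 2 ^ t * (Nb r).card.descFactorial t :=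
        Nat.mul_le_mul_left _ (Nat.pow_sub_le_descFactorial _ _)
      _ = 2 ^ t * t.factorial * (Nb r).card.choose t := by
        rw [Nat.descFactorial_eq_factorial_mul_choose, mul_assoc]
      _ ≤ 2 ^ t * t.factorial * (R.choose t * (Bad r).card) := Nat.mul_le_mul_left _ h1
      _ = K * (Bad r).card := by rw [hK, mul_assoc, mul_assoc, mul_assoc]
      _ ≤ _ := Nat.le_add_left _ _
  have hbad : ∑ r, (Bad r).card ≤ n ^ t * (m ^ a * 2 ^ L) := by
    calc ∑ r, (Bad r).card
        = ∑ T ∈ powersetCard t (univ : Finset (Fin n)), (univ.filter fun r : Fin n =>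
            (∀ c ∈ T, M r c = true) ∧ (auxJ m M r T).card < a).card := by
          simp only [Bad, card_filter]
          rw [sum_comm]
      _ ≤ ∑ T ∈ powersetCard t (univ : Finset (Fin n)), m ^ a * 2 ^ L :=
          sum_le_sum fun T _ => aux_bad a m L hm M hL T
      _ = n.choose t * (m ^ a * 2 ^ L) := by simp
      _ ≤ _ := Nat.mul_le_mul_right _ (Nat.choose_le_pow n t)
  have hw : matWeight M = ∑ r, (Nb r).card := by
    simp only [matWeight, Nb, card_filter]
    rw [← univ_product_univ, sum_product]
  obtain ⟨u, rfl⟩ : ∃ u, t = u + 1 := ⟨t - 1, by omega⟩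
  have hma : 1 ≤ m ^ a := Nat.one_le_pow _ _ (by omega)
  have hsum : ∑ r, (Nb r).card ^ (u + 1) ≤ (R ^ (u+1) + K * 2 ^ L) * n ^ (u+1) * m ^ a := by
    calc ∑ r, (Nb r).card ^ (u + 1) ≤ ∑ r, (R ^ (u+1) + K * (Bad r).card) :=
          sum_le_sum fun r _ => hrow r
      _ = n * R ^ (u+1) + K * ∑ r, (Bad r).card := by
          rw [sum_add_distrib, mul_sum]; simp
      _ ≤ (n ^ (u+1) * m ^ a) * R ^ (u+1) + K * (n ^ (u+1) * (m ^ a * 2 ^ L)) := by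
          gcongr
          calc n = n ^ 1 * 1 := by simp
            _ ≤ n ^ (u+1) * m ^ a :=
              Nat.mul_le_mul (Nat.pow_le_pow_right hn (by omega)) hma
      _ = _ := by ring
  have hpm : (∑ r, (Nb r).card) ^ (u + 1) ≤ n ^ u * ∑ r, (Nb r).card ^ (u + 1) := by
    have h := pow_sum_div_card_le_sum_pow (s := (univ : Finset (Fin n)))
      (f := fun r => ((Nb r).card : ℝ)) (fun _ _ => by positivity) u
    rw [div_le_iff₀ (by simp; positivity)] at h
    simp only [card_univ, Fintype.card_fin] at h
    rw [mul_comm]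
    exact_mod_cast h
  rw [hw]
  refine hpm.trans ((Nat.mul_le_mul_left _ hsum).trans (le_of_eq ?_))
  have : 2 * (u + 1) - 1 = u + (u + 1) := by omega
  rw [this, pow_add]; ring

/-- If every row of the zero-one matrix `A` contains at most `t` one-entries, then
`ex(n, A) ≤ C · n^(2 - 1/t + ε)`. -/
theorem statement0 (t : ℕ) (ht : 1 ≤ t) (ε : ℝ) (hε : 0 < ε) (a b : ℕ)
    (A : Fin a → Fin b → Bool)
    (hA : ∀ i : Fin a, (Finset.univ.filter fun j : Fin b => A i j = true).card ≤ t) :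
    ∃ C : ℝ, 0 < C ∧ ∀ n : ℕ, 0 < n →
      (matEx n A : ℝ) ≤ C * (n : ℝ) ^ (2 - 1 / (t : ℝ) + ε) := by
  set δ : ℝ := ε / (a + 1) with hδ
  have hδ0 : 0 < δ := by positivity
  obtain ⟨C, hC0, hC⟩ := aux_main t ht a b (⌊1 / δ⌋₊ + 1) A hA
  have hC1 : (1 : ℝ) ≤ C := by exact_mod_cast hC0
  set D : ℝ := C * 3 ^ a with hD
  have hD1 : 1 ≤ D := one_le_mul_of_one_le_of_one_le hC1 (one_le_pow₀ (by norm_num))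
  refine ⟨D, by linarith, fun n hn => ?_⟩
  have hn1 : (1 : ℝ) ≤ n := by exact_mod_cast hn
  have hn0 : (0 : ℝ) < n := by linarith
  have hbound : ∀ M : Fin n → Fin n → Bool, ¬ matContains M A →
      (matWeight M : ℝ) ≤ D * (n : ℝ) ^ (2 - 1 / (t : ℝ) + ε) := by
    intro M hM
    have hnd : 1 ≤ (n : ℝ) ^ δ := Real.one_le_rpow hn1 hδ0.le
    set m : ℕ := ⌈(n : ℝ) ^ δ⌉₊ + 1 with hm
    have hm_ge : (n : ℝ) ^ δ ≤ m := by
      rw [hm]; push_cast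
      linarith [Nat.le_ceil ((n : ℝ) ^ δ)]
    have hm_le : (m : ℝ) ≤ 3 * (n : ℝ) ^ δ := by
      rw [hm]; push_cast
      linarith [Nat.ceil_lt_add_one (a := (n : ℝ) ^ δ) (by linarith)]
    have hm2 : 2 ≤ m := by
      have : 0 < ⌈(n : ℝ) ^ δ⌉₊ := Nat.ceil_pos.2 (by linarith)
      omega
    have hL : ∀ x, x < n → Nat.log m x < ⌊1 / δ⌋₊ + 1 := by
      intro x hx
      rcases Nat.eq_zero_or_pos x with rfl | hx0
      · simp
      rw [Nat.lt_succ_iff]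
      apply Nat.le_floor
      have h1 : m ^ (Nat.log m x) < n := (Nat.pow_log_le_self m hx0.ne').trans_lt hx
      have h2 : (m : ℝ) ^ (Nat.log m x) < n := by exact_mod_cast h1
      have h3 : ((n : ℝ) ^ δ) ^ (Nat.log m x) < n :=
        (pow_le_pow_left₀ (by positivity) hm_ge _).trans_lt h2
      rw [← Real.rpow_mul_natCast hn0.le] at h3
      have hn2 : (1 : ℝ) < n := by
        have : 1 < n := by omega
        exact_mod_cast this
      have h4 : δ * (Nat.log m x : ℝ) < 1 := by
        rw [← Real.rpow_lt_rpow_left_iff hn2, Real.rpow_one]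
        exact h3
      rw [le_div_iff₀ hδ0]
      linarith
    have h := hC n m hn hm2 hL M hM
    have h' : (matWeight M : ℝ) ^ t ≤ C * (n : ℝ) ^ (2 * t - 1) * (m : ℝ) ^ a := by
      exact_mod_cast h
    have ht0 : (0 : ℝ) < t := by exact_mod_cast ht
    have ht1 : (1 : ℝ) ≤ t := by exact_mod_cast ht
    rw [← pow_le_pow_iff_left₀ (n := t) (by positivity) (by positivity) (by omega)]
    have hma : (m : ℝ) ^ a ≤ 3 ^ a * (n : ℝ) ^ (t * ε) := by
      calc (m : ℝ) ^ a ≤ (3 * (n : ℝ) ^ δ) ^ a := pow_le_pow_left₀ (by positivity) hm_le _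
        _ = 3 ^ a * (n : ℝ) ^ (δ * a) := by rw [mul_pow, Real.rpow_mul_natCast hn0.le]
        _ ≤ _ := by
          refine mul_le_mul_of_nonneg_left (Real.rpow_le_rpow_of_exponent_le hn1 ?_) (by positivity)
          · have h1 : δ * a ≤ ε := by
              have : δ * (a + 1) = ε := by rw [hδ]; field_simp
              nlinarith
            nlinarith
    have hexp : ((n : ℝ) ^ (2 - 1 / (t : ℝ) + ε)) ^ t
        = (n : ℝ) ^ (2 * t - 1) * (n : ℝ) ^ (t * ε) := by
      rw [← Real.rpow_mul_natCast hn0.le, ← Real.rpow_natCast (n : ℝ) (2 * t - 1),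
        ← Real.rpow_add hn0]
      congr 1
      rw [Nat.cast_sub (by omega)]
      push_cast
      field_simp
    calc (matWeight M : ℝ) ^ t ≤ C * (n : ℝ) ^ (2 * t - 1) * (m : ℝ) ^ a := h'
      _ ≤ C * (n : ℝ) ^ (2 * t - 1) * (3 ^ a * (n : ℝ) ^ (t * ε)) := by gcongr
      _ = D * ((n : ℝ) ^ (2 - 1 / (t : ℝ) + ε)) ^ t := by rw [hexp, hD]; ring
      _ ≤ D ^ t * ((n : ℝ) ^ (2 - 1 / (t : ℝ) + ε)) ^ t := by
        gcongr
        exact le_self_pow₀ hD1 (by omega)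
      _ = _ := (mul_pow _ _ _).symm
  have hpos : 0 ≤ D * (n : ℝ) ^ (2 - 1 / (t : ℝ) + ε) := by positivity
  have hfl : matEx n A ≤ ⌊D * (n : ℝ) ^ (2 - 1 / (t : ℝ) + ε)⌋₊ := by
    apply csSup_le'
    rintro w ⟨M, hM, rfl⟩
    exact Nat.le_floor (hbound M hM)
  exact (Nat.le_floor_iff hpos).1 hfl
end

section
/- Let t ≥ 2 be an integer and let A be a column-t-partite zero-one matrix. Then there is a constant C (depending on A and t) such that for every positive integer n, ex(n, A) ≤ C · n^{2 − 1/t}. -/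
/-- `A` is column-`t`-partite: the columns can be cut into `t` consecutive intervals
(given by cut points `c 0 = 0 ≤ c 1 ≤ ⋯ ≤ c t = b`) such that each row has at most one
1-entry within each interval. -/
def ColumnPartite {a b : ℕ} (t : ℕ) (A : Fin a → Fin b → Bool) : Prop :=
  ∃ c : ℕ → ℕ, Monotone c ∧ c 0 = 0 ∧ c t = b ∧
    ∀ i : Fin a, ∀ p < t,
      (Finset.univ.filter fun j : Fin b =>
        A i j = true ∧ c p ≤ (j : ℕ) ∧ (j : ℕ) < c (p + 1)).card ≤ 1

lemma nonbad_card (L D a : ℕ) (R S : Finset ℕ) (hR : ∀ r ∈ R, r < L ^ D) (hSR : S ⊆ R)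
    (hS : ∀ r ∈ S, ∀ j < D, ((R.filter fun r' => r' / L ^ (j+1) = r / L ^ (j+1)).image
      fun r' => r' / L ^ j).card ≤ a) : S.card ≤ a ^ D := by
  have key : ∀ i ≤ D, (S.image fun r => r / L ^ (D - i)).card ≤ a ^ i := by
    intro i
    induction i with
    | zero =>
      intro _
      have : (S.image fun r => r / L ^ (D - 0)) ⊆ {0} := by
        intro q hq
        obtain ⟨r, hr, rfl⟩ := Finset.mem_image.1 hq
        simp only [Nat.sub_zero, Finset.mem_singleton]
        exact Nat.div_eq_of_lt (hR r (hSR hr))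
      simpa using Finset.card_le_card this
    | succ i ih =>
      intro hi
      have h1 := ih (by omega)
      obtain ⟨j, hj⟩ : ∃ j, j = D - (i+1) := ⟨_, rfl⟩
      have hj' : D - i = j + 1 := by omega
      rw [hj'] at h1
      rw [← hj]
      have him : (S.image fun r => r / L ^ j).image (fun q => q / L) = S.image fun r => r / L ^ (j+1) := by
        rw [Finset.image_image]
        apply Finset.image_congr
        intro r _
        simp [Nat.div_div_eq_div_mul, pow_succ]
      have := Finset.card_le_mul_card_image (f := fun q => q / L) (S.image fun r => r / L ^ j) a (by
        intro y hy
        rw [him] at hy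
        obtain ⟨r, hr, rfl⟩ := Finset.mem_image.1 hy
        refine le_trans (Finset.card_le_card ?_) (hS r hr j (by omega))
        intro q hq
        obtain ⟨hq1, hq2⟩ := Finset.mem_filter.1 hq
        obtain ⟨r', hr', rfl⟩ := Finset.mem_image.1 hq1
        refine Finset.mem_image.2 ⟨r', Finset.mem_filter.2 ⟨hSR hr', ?_⟩, rfl⟩
        simpa [Nat.div_div_eq_div_mul, pow_succ] using hq2)
      rw [him] at this
      calc _ ≤ _ := this
        _ ≤ a * a ^ i := Nat.mul_le_mul_left _ h1
        _ = _ := by ring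
  simpa using key D le_rfl

lemma branch_fun (L a j r : ℕ) (hL : 0 < L) (R : Finset ℕ)
    (h : a ≤ ((R.filter fun r' => r' / L ^ (j+1) = r / L ^ (j+1)).image
      fun r' => r' / L ^ j).card) :
    ∃ φ : Fin a → Fin L, StrictMono φ ∧ ∀ i, ∃ r' ∈ R, r' / L ^ j = L * (r / L ^ (j+1)) + φ i := by
  obtain ⟨Q, hQ, hc⟩ := Finset.exists_subset_card_eq h
  have hq : ∀ i, (∃ r' ∈ R, r' / L ^ j = Q.orderEmbOfFin hc i) ∧
      Q.orderEmbOfFin hc i / L = r / L ^ (j+1) := by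
    intro i
    have := hQ (Q.orderEmbOfFin_mem hc i)
    obtain ⟨r', hr', h2⟩ := Finset.mem_image.1 this
    obtain ⟨h3, h4⟩ := Finset.mem_filter.1 hr'
    refine ⟨⟨r', h3, h2⟩, ?_⟩
    rw [← h2, ← h4, Nat.div_div_eq_div_mul, pow_succ]
  have hd : ∀ i, Q.orderEmbOfFin hc i = L * (r / L ^ (j+1)) + Q.orderEmbOfFin hc i % L := by
    intro i
    rw [← (hq i).2, Nat.div_add_mod]
  refine ⟨fun i => ⟨Q.orderEmbOfFin hc i % L, Nat.mod_lt _ hL⟩, ?_, ?_⟩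
  · intro i i' hii
    have h1 : Q.orderEmbOfFin hc i < Q.orderEmbOfFin hc i' := (Q.orderEmbOfFin hc).strictMono hii
    rw [hd i, hd i'] at h1
    simpa using h1
  · intro i
    obtain ⟨r', h1, h2⟩ := (hq i).1
    exact ⟨r', h1, by rw [h2]; exact hd i⟩

lemma part_fun {a b : ℕ} (t : ℕ) (A : Fin a → Fin b → Bool) (hA : ColumnPartite t A) :
    ∃ P : Fin b → Fin t, Monotone P ∧ ∀ i j j', A i j = true → A i j' = true → P j = P j' → j = j' := by
  obtain ⟨c, hc, h0, ht, h⟩ := hA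
  have ex : ∀ j : Fin b, ∃ p : Fin t, c p ≤ j ∧ (j:ℕ) < c (p+1) := by
    intro j
    have hf : ∃ m, (j:ℕ) < c m := ⟨t, by rw [ht]; exact j.2⟩
    classical
    have h1 := Nat.find_spec hf
    have h2 : Nat.find hf ≤ t := Nat.find_min' hf (by rw [ht]; exact j.2)
    have h3 : Nat.find hf ≠ 0 := by
      intro h3
      rw [h3, h0] at h1
      omega
    have h4 := Nat.find_min hf (m := Nat.find hf - 1) (by omega)
    refine ⟨⟨Nat.find hf - 1, by omega⟩, by simpa using h4, ?_⟩
    have : Nat.find hf - 1 + 1 = Nat.find hf := by omega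
    simpa only [this] using h1
  choose P hP using ex
  refine ⟨P, ?_, ?_⟩
  · intro j j' hj
    by_contra hlt
    push Not at hlt
    have h1 : c (P j' + 1) ≤ c (P j) := hc hlt
    have := (hP j).1
    have := (hP j').2
    have : (j:ℕ) ≤ j' := hj
    omega
  · intro i j j' hj hj' hp
    have := Finset.card_le_one.1 (h i (P j) (P j).2)
    apply this
    · simp [hj, hP j]
    · have := hP j'
      rw [← hp] at this
      simp [hj', this]

lemma noninj_card {α : Type} [DecidableEq α] (S : Finset α) (k : ℕ) :
    ((Fintype.piFinset fun _ : Fin (k+1) => S).filter fun x => ¬ Function.Injective x).card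
      ≤ (k+1) * k * S.card ^ k := by
  classical
  have hsub : ((Fintype.piFinset fun _ : Fin (k+1) => S).filter fun x => ¬ Function.Injective x) ⊆
      ((Finset.univ : Finset (Fin (k+1) × Fin k)) ×ˢ (Fintype.piFinset fun _ : Fin k => S)).image
        (fun z => (Fin.insertNth z.1.1 (z.2 z.1.2) z.2 : Fin (k+1) → α)) := by
    intro x hx
    obtain ⟨hx1, hx2⟩ := Finset.mem_filter.1 hx
    rw [Fintype.mem_piFinset] at hx1
    simp only [Function.Injective, not_forall] at hx2
    obtain ⟨i, j, hij, hne⟩ := hx2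
    obtain ⟨j', hj'⟩ := Fin.exists_succAbove_eq (Ne.symm hne)
    refine Finset.mem_image.2 ⟨((i, j'), Fin.removeNth i x), ?_, ?_⟩
    · simp [Fintype.mem_piFinset, Fin.removeNth, hx1]
    · have : Fin.removeNth i x j' = x i := by
        simp only [Fin.removeNth, hj', hij]
      simp only [this]
      exact Fin.insertNth_self_removeNth i x
  refine (Finset.card_le_card hsub).trans (Finset.card_image_le.trans ?_)
  simp [Finset.card_product]

lemma box_lemma (k t : ℕ) : ∃ c : ℕ, ∃ C : ℝ, 0 < C ∧ ∀ (α : Type) [DecidableEq α] (S : Finset α)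
    (F : Finset (Fin t → α)) (δ : ℝ), 0 < δ → δ ≤ 1 → (∀ T ∈ F, ∀ p, T p ∈ S) →
    δ * (S.card : ℝ) ^ t ≤ F.card → C ≤ δ ^ c * S.card →
    ∃ x : Fin t → Fin (k+1) → α, (∀ p, Function.Injective (x p)) ∧
      ∀ u : Fin t → Fin (k+1), (fun p => x p (u p)) ∈ F := by
  induction t with
  | zero =>
    refine ⟨0, 1, one_pos, ?_⟩
    intro α _ S F δ h0 h1 hF hc _
    refine ⟨fun p => p.elim0, fun p => p.elim0, ?_⟩
    intro u
    have : 0 < F.card := by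
      have : (0:ℝ) < F.card := lt_of_lt_of_le (by simpa using h0) hc
      exact_mod_cast this
    obtain ⟨T, hT⟩ := Finset.card_pos.1 this
    convert hT using 1
  | succ t ih =>
    obtain ⟨c, C, hC, ih⟩ := ih
    refine ⟨(k+1)*c+(k+1), 2^c * C + 2 * ((k:ℝ)+1)^2 + 1, by positivity, ?_⟩
    intro α _ S F δ h0 h1 hF hc hs
    classical
    set s : ℝ := (S.card : ℝ) with hsdef
    have hs0 : 0 ≤ s := Nat.cast_nonneg _
    have hp1 : δ ^ ((k+1)*c) ≤ 1 := pow_le_one₀ h0.le h1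
    have hp2 : δ ^ (k+1) ≤ 1 := pow_le_one₀ h0.le h1
    have hpc : 0 < 2^c * C := by positivity
    have hA : 2 * ((k:ℝ)+1)^2 + 1 ≤ δ ^ (k+1) * s := by
      calc 2 * ((k:ℝ)+1)^2 + 1 ≤ δ ^ ((k+1)*c+(k+1)) * s := by linarith
        _ = δ ^ ((k+1)*c) * (δ ^ (k+1) * s) := by ring
        _ ≤ 1 * (δ ^ (k+1) * s) := by gcongr
        _ = _ := one_mul _
    have hB : C ≤ (δ ^ (k+1) / 2) ^ c * s := by
      have : 2^c * C ≤ δ ^ ((k+1)*c) * s := by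
        calc 2^c * C ≤ δ ^ ((k+1)*c+(k+1)) * s := by nlinarith [sq_nonneg ((k:ℝ)+1)]
          _ = (δ ^ ((k+1)*c) * s) * (δ ^ (k+1)) := by ring
          _ ≤ (δ ^ ((k+1)*c) * s) * 1 := by gcongr
          _ = _ := mul_one _
      rw [div_pow, ← pow_mul, div_mul_eq_mul_div, le_div_iff₀ (by positivity)]
      linarith
    have hspos : 0 < s := by
      rcases hs0.lt_or_eq with h | h
      · exact h
      · rw [← h] at hA; nlinarith [sq_nonneg ((k:ℝ)+1)]
    set B := Fintype.piFinset fun _ : Fin t => S with hBdef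
    set X := Fintype.piFinset fun _ : Fin (k+1) => S with hXdef
    have hBc : (B.card : ℝ) = s ^ t := by simp [hBdef, hsdef]
    have hXc : (X.card : ℝ) = s ^ (k+1) := by simp [hXdef, hsdef]
    let deg : (Fin t → α) → ℕ := fun b => (S.filter fun y => (Fin.cons y b : Fin (t+1) → α) ∈ F).card
    let cn : (Fin (k+1) → α) → Finset (Fin t → α) := fun x =>
      B.filter fun b => ∀ i, (Fin.cons (x i) b : Fin (t+1) → α) ∈ F
    have hFd : F.card ≤ ∑ b ∈ B, deg b := by
      rw [Finset.card_eq_sum_card_fiberwise (f := fun T : Fin (t+1) → α => (Fin.tail T : Fin t → α)) (t := B)]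
      · apply Finset.sum_le_sum
        intro b _
        apply Finset.card_le_card_of_injOn (fun T => T 0)
        · intro T hT
          obtain ⟨h2, h3⟩ := Finset.mem_filter.1 hT
          refine Finset.mem_filter.2 ⟨hF T h2 0, ?_⟩
          rw [← h3]
          simpa only [Fin.cons_self_tail] using h2
        · intro T hT T' hT' h
          obtain ⟨h2, h3⟩ := Finset.mem_filter.1 hT
          obtain ⟨h4, h5⟩ := Finset.mem_filter.1 hT'
          rw [← Fin.cons_self_tail T, ← Fin.cons_self_tail T']
          simp only at h h3 h5
          rw [h, h3, h5]
      · intro T hT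
        simp only [hBdef, Finset.mem_coe, Fintype.mem_piFinset]
        intro p
        exact hF T hT _
    have hdc : ∑ b ∈ B, deg b ^ (k+1) = ∑ x ∈ X, (cn x).card := by
      have e1 : ∀ b, deg b ^ (k+1) = (X.filter fun x => ∀ i, (Fin.cons (x i) b : Fin (t+1) → α) ∈ F).card := by
        intro b
        have : (X.filter fun x => ∀ i, (Fin.cons (x i) b : Fin (t+1) → α) ∈ F) =
            Fintype.piFinset fun _ : Fin (k+1) => (S.filter fun y => (Fin.cons y b : Fin (t+1) → α) ∈ F) := by
          ext x
          simp only [hXdef, Finset.mem_filter, Fintype.mem_piFinset]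
          exact forall_and.symm
        rw [this]
        simp [deg]
      simp only [e1, cn, Finset.card_filter]
      exact Finset.sum_comm
    have hJ : δ ^ (k+1) * s ^ (k+1) * s ^ t ≤ ∑ x ∈ X, ((cn x).card : ℝ) := by
      have hj := pow_sum_div_card_le_sum_pow (s := B) (f := fun b => (deg b : ℝ)) (fun _ _ => Nat.cast_nonneg _) k
      have e2 : ∑ x ∈ X, ((cn x).card : ℝ) = ∑ b ∈ B, (deg b : ℝ) ^ (k+1) := by exact_mod_cast hdc.symm
      rw [e2]
      refine le_trans ?_ hj
      rw [hBc, le_div_iff₀ (by positivity)]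
      have e3 : δ * s ^ (t+1) ≤ ∑ b ∈ B, (deg b : ℝ) := hc.trans (by exact_mod_cast hFd)
      calc _ = (δ * s ^ (t+1)) ^ (k+1) := by ring
        _ ≤ _ := by gcongr
    obtain ⟨x, hx, hxi, hxn⟩ : ∃ x ∈ X, Function.Injective x ∧ δ ^ (k+1) / 2 * s ^ t ≤ (cn x).card := by
      by_contra hcon
      push Not at hcon
      have hb : ∀ x ∈ X, ((cn x).card : ℝ) ≤ δ ^ (k+1) / 2 * s ^ t +
          if ¬ Function.Injective x then s ^ t else 0 := by
        intro x hx
        by_cases hi : Function.Injective x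
        · simp only [hi, not_true, if_false, add_zero]
          exact (hcon x hx hi).le
        · simp only [hi, not_false_eq_true, if_true]
          have : ((cn x).card : ℝ) ≤ B.card := by exact_mod_cast Finset.card_filter_le _ _
          rw [hBc] at this
          have : 0 ≤ δ ^ (k+1) / 2 * s ^ t := by positivity
          linarith
      have h3 := hJ.trans (Finset.sum_le_sum hb)
      rw [Finset.sum_add_distrib, ← Finset.sum_filter, Finset.sum_const, Finset.sum_const,
        nsmul_eq_mul, nsmul_eq_mul, hXc] at h3
      have h4 : (((X.filter fun x => ¬ Function.Injective x).card : ℕ) : ℝ) ≤ ((k+1) * k * s ^ k) := by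
        have h4 := noninj_card S k
        rw [hsdef]
        exact_mod_cast h4
      have h5 : δ ^ (k+1) * s ^ (k+1) * s ^ t ≤ s ^ (k+1) * (δ ^ (k+1) / 2 * s ^ t) + ((k+1) * k * s ^ k) * s ^ t := by
        refine h3.trans ?_
        gcongr
      have h6 : (s ^ k * s ^ t) * (δ ^ (k+1) * s) ≤ (s ^ k * s ^ t) * (2 * ((k+1) * k)) := by
        rw [pow_succ s k] at h5
        nlinarith
      have h7 := le_of_mul_le_mul_left h6 (by positivity)
      have hk : (0:ℝ) ≤ k := Nat.cast_nonneg _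
      nlinarith
    obtain ⟨z, hz1, hz2⟩ := ih α S (cn x) (δ ^ (k+1) / 2) (by positivity) (by linarith)
      (fun T hT p => by
        have := (Finset.mem_filter.1 hT).1
        rw [hBdef, Fintype.mem_piFinset] at this
        exact this p) hxn hB
    refine ⟨Fin.cons x z, ?_, ?_⟩
    · intro p
      refine Fin.cases ?_ ?_ p
      · simpa using hxi
      · intro q; simpa using hz1 q
    · intro u
      have := (Finset.mem_filter.1 (hz2 (fun p => u p.succ))).2 (u 0)
      convert this using 1
      funext p
      refine Fin.cases ?_ ?_ p
      · simp
      · intro q; simp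

lemma F_card {n t : ℕ} (N : Finset (Fin n)) (ht : 2 * t ≤ N.card) :
    1 / ((2:ℝ) ^ t * t.factorial) * (N.card : ℝ) ^ t ≤
      ((Finset.univ.filter fun T : Fin t → Fin n => StrictMono T ∧ ∀ p, T p ∈ N).card : ℝ) := by
  classical
  have h1 : (N.powersetCard t).card ≤
      (Finset.univ.filter fun T : Fin t → Fin n => StrictMono T ∧ ∀ p, T p ∈ N).card := by
    refine le_trans (Finset.card_le_card ?_) (Finset.card_image_le (f := fun T => Finset.univ.image T))
    intro Q hQ
    obtain ⟨hQ1, hQ2⟩ := Finset.mem_powersetCard.1 hQ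
    refine Finset.mem_image.2 ⟨Q.orderEmbOfFin hQ2, ?_, ?_⟩
    · simp only [Finset.mem_filter, Finset.mem_univ, true_and]
      exact ⟨(Q.orderEmbOfFin hQ2).strictMono, fun p => hQ1 (Q.orderEmbOfFin_mem hQ2 p)⟩
    · exact Finset.image_orderEmbOfFin_univ Q hQ2
  rw [Finset.card_powersetCard] at h1
  have h2 := Nat.pow_le_choose (α := ℝ) t N.card
  have h3 : (N.card : ℝ) / 2 ≤ ((N.card + 1 - t : ℕ) : ℝ) := by
    have : N.card ≤ 2 * (N.card + 1 - t) := by omega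
    have : (N.card : ℝ) ≤ 2 * ((N.card + 1 - t : ℕ) : ℝ) := by exact_mod_cast this
    linarith
  calc 1 / ((2:ℝ) ^ t * t.factorial) * (N.card : ℝ) ^ t = ((N.card : ℝ) / 2) ^ t / t.factorial := by
        rw [div_pow]; field_simp
    _ ≤ ((N.card + 1 - t : ℕ) : ℝ) ^ t / t.factorial := by gcongr
    _ ≤ _ := h2
    _ ≤ _ := by exact_mod_cast h1

lemma embed {a b t n L j r : ℕ} (A : Fin a → Fin b → Bool) (M : Fin n → Fin n → Bool)
    (P : Fin b → Fin t) (hPm : Monotone P)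
    (hP : ∀ i j j', A i j = true → A i j' = true → P j = P j' → j = j')
    (φ : Fin a → Fin L) (hφ : StrictMono φ) (F : Finset (Fin t → Fin n))
    (hF1 : ∀ T ∈ F, StrictMono T)
    (hF2 : ∀ T ∈ F, ∀ i, ∃ r' : Fin n, (∀ p, M r' (T p) = true) ∧
      (r' : ℕ) / L ^ j = L * (r / L ^ (j+1)) + φ i)
    (x : Fin t → Fin (b+1) → Fin n) (hx : ∀ p, Function.Injective (x p))
    (hxF : ∀ u : Fin t → Fin (b+1), (fun p => x p (u p)) ∈ F) : matContains M A := by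
  classical
  -- sort each block
  have hs : ∀ p, ∃ y : Fin (b+1) → Fin n, StrictMono y ∧ ∀ m, ∃ m', y m = x p m' := by
    intro p
    have hc : (Finset.univ.image (x p)).card = b + 1 := by
      rw [Finset.card_image_of_injective _ (hx p)]; simp
    refine ⟨(Finset.univ.image (x p)).orderEmbOfFin hc, OrderEmbedding.strictMono _, ?_⟩
    intro m
    have := (Finset.univ.image (x p)).orderEmbOfFin_mem hc m
    obtain ⟨m', _, h⟩ := Finset.mem_image.1 this
    exact ⟨m', h.symm⟩
  choose y hy hyx using hs
  have hyF : ∀ u : Fin t → Fin (b+1), (fun p => y p (u p)) ∈ F := by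
    intro u
    choose u' hu' using fun p => hyx p (u p)
    have := hxF u'
    simpa only [← hu'] using this
  have hu : ∀ i : Fin a, ∃ u : Fin t → Fin (b+1), ∀ j, A i j = true → u (P j) = j.castSucc := by
    intro i
    refine ⟨fun p => if h : ∃ j, A i j = true ∧ P j = p then h.choose.castSucc else 0, ?_⟩
    intro j hj
    have h : ∃ j', A i j' = true ∧ P j' = P j := ⟨j, hj, rfl⟩
    simp only [dif_pos h]
    rw [hP i _ j h.choose_spec.1 hj h.choose_spec.2]
  choose u hu using hu
  choose f hf1 hf2 using fun i => hF2 _ (hyF (u i)) i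
  refine ⟨f, fun j => y (P j) j.castSucc, ?_, ?_, ?_⟩
  · intro i i' hii
    by_contra hlt
    push Not at hlt
    have h1 : (f i' : ℕ) / L ^ j ≤ (f i : ℕ) / L ^ j := Nat.div_le_div_right hlt
    rw [hf2, hf2] at h1
    have : (φ i : ℕ) < φ i' := hφ hii
    omega
  · intro j j' hjj
    rcases (hPm hjj.le).lt_or_eq with h | h
    · have := hF1 _ (hyF (fun p => if p = P j then j.castSucc else j'.castSucc)) h
      simpa [h.ne'] using this
    · simp only [h]
      exact hy _ (by simpa using hjj)
  · intro i j hij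
    have := hf1 i (P j)
    simp only [hu i j hij] at this
    exact this

lemma core {a b t n L D c : ℕ} (C : ℝ) (A : Fin a → Fin b → Bool) (M : Fin n → Fin n → Bool)
    (P : Fin b → Fin t) (hPm : Monotone P)
    (hP : ∀ i j j', A i j = true → A i j' = true → P j = P j' → j = j')
    (hbox : ∀ (α : Type) [DecidableEq α] (S : Finset α)
      (F : Finset (Fin t → α)) (δ : ℝ), 0 < δ → δ ≤ 1 → (∀ T ∈ F, ∀ p, T p ∈ S) →
      δ * (S.card : ℝ) ^ t ≤ F.card → C ≤ δ ^ c * S.card →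
      ∃ x : Fin t → Fin (b+1) → α, (∀ p, Function.Injective (x p)) ∧
        ∀ u : Fin t → Fin (b+1), (fun p => x p (u p)) ∈ F)
    (ht : 1 ≤ t) (hn : n ≤ L ^ D) (hL : 0 < L) (hD : 0 < D) (q : ℝ) (hq : 2 * t ≤ q)
    (hw : 2 * n * q ≤ matWeight M)
    (c0 : ℝ) (hc0 : c0 = 1 / ((2:ℝ) ^ t * t.factorial) / 2)
    (h1 : (a:ℝ) ^ D * (n:ℝ) ^ t < c0 * q ^ t * n)
    (h2 : C ≤ (c0 / (D * (L:ℝ) ^ a)) ^ c * q) : matContains M A := by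
  classical
  have hq0 : 0 ≤ q := le_trans (by positivity) hq
  have hc0p : 0 < c0 := by rw [hc0]; positivity
  let N : Fin n → Finset (Fin n) := fun r => Finset.univ.filter fun j => M r j = true
  let Rn : (Fin t → Fin n) → Finset ℕ := fun T =>
    (Finset.univ.filter fun r : Fin n => ∀ p, T p ∈ N r).image Fin.val
  let Bad : Fin n → (Fin t → Fin n) → Prop := fun r T => ∃ j < D,
    a ≤ (((Rn T).filter fun r' => r' / L ^ (j+1) = (r:ℕ) / L ^ (j+1)).image fun r' => r' / L ^ j).card
  let F : Fin n → Finset (Fin t → Fin n) := fun r =>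
    Finset.univ.filter fun T => StrictMono T ∧ ∀ p, T p ∈ N r
  have hFN : ∀ r, q ≤ (N r).card → 2 * c0 * ((N r).card : ℝ) ^ t ≤ (F r).card := by
    intro r hr
    have : 2 * t ≤ (N r).card := by
      have := hq.trans hr
      exact_mod_cast this
    have := F_card (N r) this
    rw [hc0]
    calc _ = 1 / ((2:ℝ) ^ t * t.factorial) * ((N r).card : ℝ) ^ t := by ring
      _ ≤ _ := this
  have hnb : ∑ r, ((F r).filter fun T => ¬ Bad r T).card ≤ n ^ t * a ^ D := by
    have e : ∑ r, ((F r).filter fun T => ¬ Bad r T).card =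
        ∑ T : Fin t → Fin n, (Finset.univ.filter fun r => T ∈ F r ∧ ¬ Bad r T).card := by
      simp only [Finset.card_filter]
      rw [Finset.sum_comm]
      refine Finset.sum_congr rfl fun r _ => ?_
      rw [← Finset.card_filter, ← Finset.card_filter]
      congr 1
      ext T
      simp
    rw [e]
    have : ∀ T : Fin t → Fin n, (Finset.univ.filter fun r => T ∈ F r ∧ ¬ Bad r T).card ≤ a ^ D := by
      intro T
      rw [← Finset.card_image_of_injective _ Fin.val_injective]
      apply nonbad_card L D a (Rn T)
      · intro r hr
        obtain ⟨r', _, rfl⟩ := Finset.mem_image.1 hr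
        exact lt_of_lt_of_le r'.2 hn
      · apply Finset.image_subset_image
        intro r hr
        have := (Finset.mem_filter.1 (Finset.mem_filter.1 hr).2.1).2.2
        exact Finset.mem_filter.2 ⟨Finset.mem_univ _, this⟩
      · intro r hr j hj
        obtain ⟨r', hr', rfl⟩ := Finset.mem_image.1 hr
        have := (Finset.mem_filter.1 hr').2.2
        simp only [Bad, not_exists, not_and, not_le] at this
        exact (this j hj).le
    refine (Finset.sum_le_sum fun T _ => this T).trans ?_
    simp
  have hwN : (matWeight M : ℝ) = ∑ r, ((N r).card : ℝ) := by
    have : matWeight M = ∑ r, (N r).card := by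
      unfold matWeight
      simp only [N, Finset.card_filter]
      exact Fintype.sum_prod_type _
    exact_mod_cast this
  obtain ⟨r, hrq, hrb⟩ : ∃ r, q ≤ ((N r).card : ℝ) ∧
      2 * (((F r).filter fun T => ¬ Bad r T).card : ℝ) ≤ (F r).card := by
    by_contra hcon
    push Not at hcon
    have hlow : ∀ r, c0 * q ^ (t-1) * (((N r).card : ℝ) - q) ≤
        (((F r).filter fun T => ¬ Bad r T).card : ℝ) := by
      intro r
      by_cases hr : q ≤ (N r).card
      · have h3 := hcon r hr
        have h4 := hFN r hr
        have h5 : q ^ (t-1) * ((N r).card : ℝ) ≤ ((N r).card : ℝ) ^ t := by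
          calc _ ≤ ((N r).card : ℝ) ^ (t-1) * (N r).card := by gcongr
            _ = _ := by rw [← pow_succ, Nat.sub_add_cancel ht]
        have h6 : c0 * (q ^ (t-1) * ((N r).card : ℝ)) ≤ c0 * ((N r).card : ℝ) ^ t := by gcongr
        have h7 : 0 ≤ c0 * q ^ (t-1) * q := by positivity
        linarith
      · push Not at hr
        have : c0 * q ^ (t-1) * (((N r).card : ℝ) - q) ≤ 0 :=
          mul_nonpos_of_nonneg_of_nonpos (by positivity) (by linarith)
        exact this.trans (Nat.cast_nonneg _)
    have hsum := Finset.sum_le_sum fun r (_ : r ∈ Finset.univ) => hlow r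
    rw [← Finset.mul_sum, Finset.sum_sub_distrib, ← hwN] at hsum
    have h3 : (∑ r, (((F r).filter fun T => ¬ Bad r T).card : ℝ)) ≤ (n:ℝ) ^ t * (a:ℝ) ^ D := by
      exact_mod_cast hnb
    simp only [Finset.sum_const, Finset.card_univ, Fintype.card_fin, nsmul_eq_mul] at hsum
    have h4 : c0 * q ^ (t-1) * (n * q) ≤ c0 * q ^ (t-1) * ((matWeight M : ℝ) - n * q) := by
      apply mul_le_mul_of_nonneg_left _ (by positivity)
      linarith
    have h5 : q ^ t = q ^ (t-1) * q := by rw [← pow_succ, Nat.sub_add_cancel ht]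
    rw [h5] at h1
    nlinarith
  -- bad tuples of row r
  have hbad : c0 * ((N r).card : ℝ) ^ t ≤ ((F r).filter fun T => Bad r T).card := by
    have h3 := Finset.card_filter_add_card_filter_not (s := F r) (fun T => Bad r T)
    have h4 : (((F r).filter fun T => Bad r T).card : ℝ) +
      ((F r).filter fun T => ¬ Bad r T).card = (F r).card := by exact_mod_cast h3
    have := hFN r hrq
    linarith
  have hz : ∀ T, ∃ z : Fin D × (Fin a → Fin L), Bad r T → StrictMono z.2 ∧
      ∀ i, ∃ r' ∈ Rn T, r' / L ^ (z.1:ℕ) = L * ((r:ℕ) / L ^ ((z.1:ℕ)+1)) + z.2 i := by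
    intro T
    by_cases hT : Bad r T
    · obtain ⟨j, hj, h⟩ := hT
      obtain ⟨φ, hφ, h⟩ := branch_fun L a j r hL (Rn T) h
      exact ⟨(⟨j, hj⟩, φ), fun _ => ⟨hφ, h⟩⟩
    · exact ⟨(⟨0, hD⟩, fun _ => ⟨0, hL⟩), fun h => absurd h hT⟩
  choose z hz using hz
  have hcard : (Finset.univ : Finset (Fin D × (Fin a → Fin L))).card = D * L ^ a := by
    simp
  have hDL : (0:ℝ) < D * (L:ℝ) ^ a := by positivity
  obtain ⟨z0, -, hz0⟩ := Finset.exists_le_card_fiber_of_nsmul_le_card_of_maps_to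
    (s := (F r).filter fun T => Bad r T) (t := (Finset.univ : Finset (Fin D × (Fin a → Fin L))))
    (f := z) (b := c0 / (D * (L:ℝ) ^ a) * ((N r).card : ℝ) ^ t) (fun _ _ => Finset.mem_univ _)
    ⟨(⟨0, hD⟩, fun _ => ⟨0, hL⟩), Finset.mem_univ _⟩ (by
      rw [hcard, nsmul_eq_mul]
      push_cast
      calc _ = c0 * ((N r).card : ℝ) ^ t := by field_simp
        _ ≤ _ := hbad)
  have hmem : ∀ T ∈ ((F r).filter fun T => Bad r T).filter (fun T => z T = z0),
      StrictMono T ∧ (∀ p, T p ∈ N r) ∧ Bad r T ∧ z T = z0 := by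
    intro T hT
    simp only [Finset.mem_filter, F, Finset.mem_univ, true_and] at hT
    tauto
  have hc1 : c0 ≤ 1 := by
    rw [hc0, div_div, div_le_one (by positivity)]
    have : (1:ℝ) ≤ 2 ^ t := one_le_pow₀ (by norm_num)
    have : (1:ℝ) ≤ t.factorial := by exact_mod_cast Nat.one_le_iff_ne_zero.2 (Nat.factorial_ne_zero t)
    nlinarith
  have hDL1 : (1:ℝ) ≤ D * (L:ℝ) ^ a := by
    have : 1 ≤ D * L ^ a := Nat.mul_pos hD (Nat.pow_pos hL)
    exact_mod_cast this
  obtain ⟨x, hx, hxF⟩ := hbox (Fin n) (N r) _ (c0 / (D * (L:ℝ) ^ a)) (by positivity)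
    ((div_le_one hDL).2 (hc1.trans hDL1)) (fun T hT => (hmem T hT).2.1) hz0
    (h2.trans (by gcongr))
  have hne : StrictMono z0.2 := by
    have hT := hmem _ (hxF fun _ => 0)
    rw [← hT.2.2.2]
    exact (hz _ hT.2.2.1).1
  refine embed (j := z0.1) (r := r) A M P hPm hP z0.2 hne _ (fun T hT => (hmem T hT).1) ?_ x hx hxF
  intro T hT i
  obtain ⟨_, _, hTb, hTz⟩ := hmem T hT
  obtain ⟨r', hr', h⟩ := (hz T hTb).2 i
  obtain ⟨r'', h'', rfl⟩ := Finset.mem_image.1 hr'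
  rw [hTz] at h
  refine ⟨r'', fun p => ?_, h⟩
  have := (Finset.mem_filter.1 h'').2 p
  exact (Finset.mem_filter.1 this).2

lemma root_exists (n D : ℕ) (hn : 0 < n) (hD : 0 < D) :
    ∃ L : ℕ, 0 < L ∧ n ≤ L ^ D ∧ L ^ D ≤ 2 ^ D * n := by
  classical
  have hf : ∃ L, n ≤ L ^ D := ⟨n, Nat.le_self_pow hD.ne' n⟩
  have h1 := Nat.find_spec hf
  set L := Nat.find hf with hLd
  have hL0 : 0 < L := by
    rcases Nat.eq_zero_or_pos L with h | h
    · rw [h, zero_pow hD.ne'] at h1; omega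
    · exact h
  refine ⟨L, hL0, h1, ?_⟩
  have h2 := Nat.find_min hf (m := L - 1) (by omega)
  push Not at h2
  rcases Nat.lt_or_ge 1 L with h | h
  · calc L ^ D ≤ (2 * (L - 1)) ^ D := Nat.pow_le_pow_left (by omega) _
      _ = 2 ^ D * (L-1) ^ D := by rw [mul_pow]
      _ ≤ _ := Nat.mul_le_mul_left _ h2.le
  · have : L = 1 := by omega
    rw [this, one_pow]
    exact Nat.mul_pos (by positivity) hn

/-- If `t ≥ 2` and `A` is a column-`t`-partite zero-one matrix, then
`ex(n, A) ≤ C · n^(2 - 1/t)`. -/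
theorem statement1 (t : ℕ) (ht : 2 ≤ t) (a b : ℕ) (A : Fin a → Fin b → Bool)
    (hA : ColumnPartite t A) :
    ∃ C : ℝ, 0 < C ∧ ∀ n : ℕ, 0 < n →
      (matEx n A : ℝ) ≤ C * (n : ℝ) ^ (2 - 1 / (t : ℝ)) := by
  obtain ⟨P, hPm, hP⟩ := part_fun t A hA
  obtain ⟨c, Cb, hCb, hbox⟩ := box_lemma b t
  obtain ⟨D, hDdef⟩ : ∃ D, D = 2 * (a * c) + 1 := ⟨_, rfl⟩
  have hD : 0 < D := by omega
  obtain ⟨c0, hc0⟩ : ∃ c0 : ℝ, c0 = 1 / ((2:ℝ) ^ t * t.factorial) / 2 := ⟨_, rfl⟩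
  have hc0p : 0 < c0 := by rw [hc0]; positivity
  obtain ⟨κ, hκ⟩ : ∃ κ : ℝ, κ = c0 / D := ⟨_, rfl⟩
  have hκp : 0 < κ := by rw [hκ]; positivity
  obtain ⟨Q, hQ⟩ : ∃ Q : ℝ, Q = 2 * t + ((a:ℝ) ^ D / c0 + 1) + Cb * 2 ^ D / κ ^ c := ⟨_, rfl⟩
  have p1 : (0:ℝ) ≤ 2 * t := by positivity
  have p2 : (0:ℝ) ≤ (a:ℝ) ^ D / c0 := by positivity
  have p3 : (0:ℝ) ≤ Cb * 2 ^ D / κ ^ c := by positivity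
  have hQ1 : 1 ≤ Q := by linarith
  have hQ0 : 0 < Q := by linarith
  refine ⟨2 * Q, by linarith, ?_⟩
  intro n hn
  have hn1 : (1:ℝ) ≤ n := by exact_mod_cast hn
  have hn0 : (0:ℝ) < n := by linarith
  have ht0 : (0:ℝ) < t := by positivity
  have ht2 : (2:ℝ) ≤ t := by exact_mod_cast ht
  have hit : 1 / (t:ℝ) ≤ 1 / 2 := one_div_le_one_div_of_le (by norm_num) ht2
  suffices h : matEx n A ≤ ⌊2 * Q * (n : ℝ) ^ (2 - 1 / (t : ℝ))⌋₊ by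
    exact (Nat.le_floor_iff (by positivity)).1 h
  apply csSup_le'
  rintro w ⟨M, hM, rfl⟩
  apply Nat.le_floor
  by_contra hlt
  push Not at hlt
  apply hM
  obtain ⟨L, hL, hnL, hLn⟩ := root_exists n D hn hD
  obtain ⟨q, hq⟩ : ∃ q : ℝ, q = Q * (n:ℝ) ^ (1 - 1 / (t:ℝ)) := ⟨_, rfl⟩
  have hpow1 : (1:ℝ) ≤ (n:ℝ) ^ (1 - 1 / (t:ℝ)) := Real.one_le_rpow hn1 (by linarith)
  have hqQ : Q ≤ q := by rw [hq]; nlinarith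
  have hqt : q ^ t * n = Q ^ t * (n:ℝ) ^ t := by
    rw [hq, mul_pow, ← Real.rpow_natCast ((n:ℝ) ^ (1 - 1 / (t:ℝ))), ← Real.rpow_mul hn0.le, mul_assoc,
      ← Real.rpow_add_one hn0.ne', ← Real.rpow_natCast (n:ℝ) t]
    congr 2
    field_simp
    ring
  have hq2 : Q ^ 2 * n ≤ q ^ 2 := by
    rw [hq, mul_pow, ← Real.rpow_natCast ((n:ℝ) ^ (1 - 1 / (t:ℝ))), ← Real.rpow_mul hn0.le]
    have : (n:ℝ) ^ (1:ℝ) ≤ (n:ℝ) ^ ((1 - 1 / (t:ℝ)) * (2:ℕ)) :=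
      Real.rpow_le_rpow_of_exponent_le hn1 (by push_cast; linarith)
    rw [Real.rpow_one] at this
    gcongr
  refine core Cb A M P hPm hP hbox (by omega) hnL hL hD q (by linarith) ?_ c0 hc0 ?_ ?_
  · refine le_trans (le_of_eq ?_) hlt.le
    have : (n:ℝ) ^ (2 - 1 / (t:ℝ)) = (n:ℝ) ^ (1 - 1 / (t:ℝ)) * n := by
      rw [← Real.rpow_add_one hn0.ne']
      congr 1
      ring
    rw [this, hq]
    ring
  · have h1 : c0 * q ^ t * n = c0 * Q ^ t * (n:ℝ) ^ t := by rw [mul_assoc, hqt]; ring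
    rw [h1]
    have h2 : (a:ℝ) ^ D < c0 * Q := by
      have : (a:ℝ) ^ D / c0 < Q := by linarith
      rw [div_lt_iff₀ hc0p] at this
      linarith
    have h3 : Q ≤ Q ^ t := le_self_pow₀ hQ1 (by omega)
    have h4 : c0 * Q ≤ c0 * Q ^ t := by gcongr
    have : (0:ℝ) < (n:ℝ) ^ t := by positivity
    gcongr
    linarith
  · have hL1 : (1:ℝ) ≤ L := by exact_mod_cast hL
    have hq0 : 0 < q := by linarith
    have e : c0 / (D * (L:ℝ) ^ a) = κ / (L:ℝ) ^ a := by rw [hκ, div_div]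
    rw [e]
    have hLp : ((L:ℝ) ^ (a * c)) ^ 2 ≤ 2 ^ D * n := by
      calc ((L:ℝ) ^ (a * c)) ^ 2 = (L:ℝ) ^ (2 * (a * c)) := by rw [← pow_mul]; congr 1; ring
        _ ≤ (L:ℝ) ^ D := pow_le_pow_right₀ hL1 (by omega)
        _ ≤ _ := by exact_mod_cast hLn
    rw [div_pow, ← pow_mul, div_mul_eq_mul_div, le_div_iff₀ (by positivity)]
    refine le_of_pow_le_pow_left₀ (n := 2) two_ne_zero (by positivity) ?_
    have hQb : Cb * 2 ^ D ≤ κ ^ c * Q := by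
      have : Cb * 2 ^ D / κ ^ c ≤ Q := by linarith
      rw [div_le_iff₀ (by positivity)] at this
      linarith
    have h2D : (1:ℝ) ≤ 2 ^ D := one_le_pow₀ (by norm_num)
    calc (Cb * (L:ℝ) ^ (a * c)) ^ 2 = Cb ^ 2 * ((L:ℝ) ^ (a * c)) ^ 2 := by ring
      _ ≤ Cb ^ 2 * (2 ^ D * n) := by gcongr
      _ ≤ Cb ^ 2 * (2 ^ D * n) * 2 ^ D := le_mul_of_one_le_right (by positivity) h2D
      _ = (Cb * 2 ^ D) ^ 2 * n := by ring
      _ ≤ (κ ^ c * Q) ^ 2 * n := by gcongr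
      _ = (κ ^ c) ^ 2 * (Q ^ 2 * n) := by ring
      _ ≤ (κ ^ c) ^ 2 * q ^ 2 := by gcongr
      _ = _ := by ring
end

section
/- Let t ≥ 1 be an integer, let ε > 0, and let H be an ordered bipartite graph (an ordered graph with interval chromatic number at most 2, with vertex classes X and Y where every vertex of X precedes every vertex of Y) such that every vertex of X has degree at most t. Then there is a constant C such that for every positive integer n, ex_<(n, H) ≤ C · n^{2 − 1/t + ε}. -/
/-- An ordered graph `G` on `Fin m` (with the natural vertex order) contains the ordered graph
`H` on `Fin h` as an ordered subgraph if there is an order-preserving injective graph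
homomorphism from `H` to `G`. -/
def ordContains {m h : ℕ} (G : SimpleGraph (Fin m)) (H : SimpleGraph (Fin h)) : Prop :=
  ∃ f : Fin h → Fin m, StrictMono f ∧ ∀ u v, H.Adj u v → G.Adj (f u) (f v)

/-- The ordered extremal number `ex_<(n, H)`: the maximum number of edges in an ordered graph
on `n` vertices not containing `H` as an ordered subgraph. -/
noncomputable def ordEx {h : ℕ} (n : ℕ) (H : SimpleGraph (Fin h)) : ℕ :=
  sSup {e : ℕ | ∃ G : SimpleGraph (Fin n), ¬ ordContains G H ∧ G.edgeSet.ncard = e}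

open Finset in
theorem ramsey_aux (t : ℕ) (κ : Type) [Fintype κ] [DecidableEq κ] :
    ∀ m : ℕ, ∃ R : ℕ, ∀ (α : Type) [DecidableEq α] (V : Finset α), R ≤ V.card →
      ∀ f : Finset α → κ, ∃ S ⊆ V, S.card = m ∧ ∃ k, ∀ T ⊆ S, T.card = t → f T = k := by
  induction t with
  | zero =>
    intro m
    refine ⟨m, fun α _ V hV f => ?_⟩
    obtain ⟨S, hS, hc⟩ := Finset.exists_subset_card_eq hV
    refine ⟨S, hS, hc, f ∅, fun T _ hT => ?_⟩
    rw [Finset.card_eq_zero.mp hT]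
  | succ t ih =>
    have key : ∀ N : ℕ, ∀ m : κ → ℕ, ∑ k, m k ≤ N → ∃ R : ℕ, ∀ (α : Type) [DecidableEq α]
        (V : Finset α), R ≤ V.card → ∀ f : Finset α → κ,
        ∃ k, ∃ S ⊆ V, S.card = m k ∧ ∀ T ⊆ S, T.card = t + 1 → f T = k := by
      intro N
      induction N with
      | zero =>
        intro m hm
        refine ⟨0, fun α _ V hV f => ?_⟩
        have hk : m (f ∅) = 0 := by
          have := Finset.single_le_sum (f := m) (fun i _ => Nat.zero_le _) (mem_univ (f ∅))
          omega
        refine ⟨f ∅, ∅, by simp, by simp [hk], fun T hT hc => ?_⟩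
        rw [Finset.subset_empty.mp hT] at hc
        simp at hc
      | succ N ihN =>
        intro m hm
        by_cases hz : ∃ k, m k = 0
        · obtain ⟨k, hk⟩ := hz
          refine ⟨0, fun α _ V hV f => ⟨k, ∅, by simp, by simp [hk], fun T hT hc => ?_⟩⟩
          rw [Finset.subset_empty.mp hT] at hc
          simp at hc
        · push Not at hz
          have hstep : ∀ k0 : κ, ∑ k, (Function.update m k0 (m k0 - 1)) k ≤ N := by
            intro k0
            have h1 : ∑ k, (Function.update m k0 (m k0 - 1)) k < ∑ k, m k := by
              apply Finset.sum_lt_sum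
              · intro i _
                by_cases hi : i = k0
                · subst hi; simp
                · simp [hi]
              · refine ⟨k0, mem_univ _, ?_⟩
                have := hz k0
                simp; omega
            omega
          choose Rf hRf using fun k0 => ihN _ (hstep k0)
          obtain ⟨R, hR⟩ := ih (∑ k, Rf k)
          refine ⟨R + 1, fun α _ V hV f => ?_⟩
          have hne : V.Nonempty := by
            rw [← Finset.card_pos]; omega
          obtain ⟨v, hv⟩ := hne
          obtain ⟨S, hSV, hSc, k0, hk0⟩ := hR α (V.erase v)
            (by rw [Finset.card_erase_of_mem hv]; omega) (fun T => f (insert v T))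
          have hvS : v ∉ S := fun h => by simpa using hSV h
          have hle : Rf k0 ≤ S.card := by
            rw [hSc]
            exact Finset.single_le_sum (f := Rf) (fun i _ => Nat.zero_le _) (mem_univ k0)
          obtain ⟨k, S', hS', hc', hm'⟩ := hRf k0 α S hle f
          by_cases hk : k = k0
          · subst hk
            refine ⟨k, insert v S', ?_, ?_, ?_⟩
            · apply Finset.insert_subset hv
              exact hS'.trans (hSV.trans (Finset.erase_subset _ _))
            · rw [Finset.card_insert_of_notMem (fun h => hvS (hS' h)), hc']
              have := hz k
              simp; omega
            · intro T hT hTc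
              by_cases hvT : v ∈ T
              · have h1 : T.erase v ⊆ S := by
                  intro a ha
                  rw [Finset.mem_erase] at ha
                  have := hT ha.2
                  rw [Finset.mem_insert] at this
                  exact hS' (this.resolve_left ha.1)
                have := hk0 (T.erase v) h1 (by rw [Finset.card_erase_of_mem hvT]; omega)
                rwa [Finset.insert_erase hvT] at this
              · apply hm' T _ hTc
                intro a ha
                have := hT ha
                rw [Finset.mem_insert] at this
                refine this.resolve_left ?_
                rintro rfl
                exact hvT ha
          · refine ⟨k, S', ?_, ?_, hm'⟩
            · exact hS'.trans (hSV.trans (Finset.erase_subset _ _))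
            · rw [hc']; simp [hk]
    intro m
    obtain ⟨R, hR⟩ := key _ (fun _ => m) le_rfl
    refine ⟨R, fun α _ V hV f => ?_⟩
    obtain ⟨k, S, h1, h2, h3⟩ := hR α V hV f
    exact ⟨S, h1, h2, k, h3⟩

open Finset Classical in
/-- Left-branching levels of `r` in the `b`-adic tree of the set `N`. -/
noncomputable def lftLev (b l : ℕ) {n : ℕ} (N : Finset (Fin n)) (r : Fin n) : Finset (Fin l) :=
  univ.filter fun j => ∃ s ∈ N, (s : ℕ) / b ^ (j.val + 1) = (r : ℕ) / b ^ (j.val + 1) ∧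
    (s : ℕ) / b ^ j.val < (r : ℕ) / b ^ j.val

theorem exists_split (b l : ℕ) (r s : ℕ) (hr : r < b ^ l) (hs : s < b ^ l) (hne : r ≠ s) :
    ∃ j < l, r / b ^ (j + 1) = s / b ^ (j + 1) ∧ r / b ^ j ≠ s / b ^ j := by
  classical
  have hex : ∃ j, r / b ^ j = s / b ^ j := ⟨l, by rw [Nat.div_eq_of_lt hr, Nat.div_eq_of_lt hs]⟩
  have hsp := Nat.find_spec hex
  have hle : Nat.find hex ≤ l :=
    Nat.find_min' hex (by rw [Nat.div_eq_of_lt hr, Nat.div_eq_of_lt hs])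
  rcases hj : Nat.find hex with _ | j
  · rw [hj] at hsp
    simp at hsp
    exact absurd hsp hne
  · refine ⟨j, by omega, by rw [hj] at hsp; exact hsp, ?_⟩
    exact Nat.find_min hex (by omega)

open Finset Classical in
theorem few_left (b l x n : ℕ) (hb : 0 < b) (hn : n ≤ b ^ l) (N : Finset (Fin n)) :
    (N.filter fun r => (lftLev b l N r).card < x).card ≤ 2 ^ l * b ^ x := by
  have key : ∀ L : Finset (Fin l), (N.filter fun r => lftLev b l N r = L).card ≤ b ^ L.card := by
    intro L
    have : b ^ L.card = (univ : Finset (L → Fin b)).card := by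
      simp
    rw [this]
    apply Finset.card_le_card_of_injOn
      (fun r : Fin n => fun j : L => (⟨((r : ℕ) / b ^ (j.1.val)) % b, Nat.mod_lt _ hb⟩ : Fin b))
    · intro r _; simp
    · have wl : ∀ r s : Fin n, r ∈ N → s ∈ N → lftLev b l N r = L → lftLev b l N s = L →
          (∀ j : Fin l, j ∈ L → ((r : ℕ) / b ^ (j.val)) % b = ((s : ℕ) / b ^ (j.val)) % b) →
          ∀ j : Fin l, (r : ℕ) / b ^ (j.val + 1) = (s : ℕ) / b ^ (j.val + 1) →
            ¬ (r : ℕ) / b ^ j.val < (s : ℕ) / b ^ j.val := by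
        intro r s hr hs hLr hLs hd j h1 h2
        have hj : j ∈ L := by
          rw [← hLs]
          simp only [lftLev, mem_filter, mem_univ, true_and]
          exact ⟨r, hr, h1, h2⟩
        have h3 := hd j hj
        rw [pow_succ, ← Nat.div_div_eq_div_mul, ← Nat.div_div_eq_div_mul] at h1
        have e1 := Nat.div_add_mod ((r : ℕ) / b ^ j.val) b
        have e2 := Nat.div_add_mod ((s : ℕ) / b ^ j.val) b
        rw [h1, h3] at e1
        omega
      intro r hr s hs hrs
      simp only [coe_filter, Set.mem_ofPred_eq] at hr hs
      have hd : ∀ j : Fin l, j ∈ L →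
          ((r : ℕ) / b ^ (j.val)) % b = ((s : ℕ) / b ^ (j.val)) % b := by
        intro j hj
        have := congrFun hrs ⟨j, hj⟩
        simpa using this
      by_contra hne
      obtain ⟨j, hjl, h1, h2⟩ := exists_split b l r s (r.2.trans_le hn) (s.2.trans_le hn)
        (fun h => hne (Fin.ext h))
      rcases Nat.lt_or_gt_of_ne h2 with h3 | h3
      · exact wl r s hr.1 hs.1 hr.2 hs.2 hd ⟨j, hjl⟩ h1 h3
      · exact wl s r hs.1 hr.1 hs.2 hr.2 (fun j hj => (hd j hj).symm) ⟨j, hjl⟩ h1.symm h3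
  calc (N.filter fun r => (lftLev b l N r).card < x).card
      ≤ ((univ.filter fun L : Finset (Fin l) => L.card < x).biUnion
          fun L => N.filter fun r => lftLev b l N r = L).card := by
        apply card_le_card
        intro r hr
        simp only [mem_filter, mem_biUnion, mem_univ, true_and] at hr ⊢
        exact ⟨_, hr.2, hr.1, rfl⟩
    _ ≤ ∑ L ∈ (univ.filter fun L : Finset (Fin l) => L.card < x),
          (N.filter fun r => lftLev b l N r = L).card := card_biUnion_le
    _ ≤ ∑ L ∈ (univ.filter fun L : Finset (Fin l) => L.card < x), b ^ x := by
        apply sum_le_sum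
        intro L hL
        simp only [mem_filter, mem_univ, true_and] at hL
        exact (key L).trans (Nat.pow_le_pow_right hb hL.le)
    _ ≤ 2 ^ l * b ^ x := by
        rw [sum_const, smul_eq_mul]
        apply Nat.mul_le_mul_right
        refine (card_le_univ _).trans ?_
        simp

open Finset Classical in
theorem supersat {α : Type} [DecidableEq α] (t R : ℕ) (hR : t ≤ R) (V : Finset α)
    (hV : R ≤ V.card) (P : Finset α → Prop)
    (hP : ∀ Z ⊆ V, Z.card = R → ∃ T ⊆ Z, T.card = t ∧ P T) :
    V.card.choose t ≤ R.choose t * ((V.powersetCard t).filter P).card := by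
  have h1 : V.card.choose R ≤
      ((V.powersetCard t).filter P).card * (V.card - t).choose (R - t) := by
    rw [← card_powersetCard]
    calc (V.powersetCard R).card
        ≤ (((V.powersetCard t).filter P).biUnion fun T =>
            (V.powersetCard R).filter fun Z => T ⊆ Z).card := by
          apply card_le_card
          intro Z hZ
          have hZ' := mem_powersetCard.mp hZ
          obtain ⟨T, hT, hc, hPT⟩ := hP Z hZ'.1 hZ'.2
          simp only [mem_biUnion, mem_filter, mem_powersetCard]
          exact ⟨T, ⟨⟨hT.trans hZ'.1, hc⟩, hPT⟩, hZ', hT⟩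
      _ ≤ _ := by
          apply card_biUnion_le_card_mul
          intro T hT
          simp only [mem_filter, mem_powersetCard] at hT
          have : (V.card - t).choose (R - t) = ((V \ T).powersetCard (R - t)).card := by
            rw [card_powersetCard, card_sdiff_of_subset hT.1.1, hT.1.2]
          rw [this]
          apply card_le_card_of_injOn (fun Z => Z \ T)
          · intro Z hZ
            simp only [coe_filter, Set.mem_ofPred_eq, mem_powersetCard] at hZ
            simp only [mem_coe, mem_powersetCard]
            refine ⟨sdiff_subset_sdiff hZ.1.1 le_rfl, ?_⟩
            rw [card_sdiff_of_subset hZ.2, hZ.1.2, hT.1.2]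
          · intro Z hZ Z' hZ' he
            simp only [coe_filter, Set.mem_ofPred_eq] at hZ hZ'
            have he' : Z \ T = Z' \ T := he
            rw [← sdiff_union_of_subset hZ.2, he', sdiff_union_of_subset hZ'.2]
  have h2 := Nat.choose_mul (n := V.card) (k := R) (s := t) hR
  have h3 : 0 < (V.card - t).choose (R - t) := Nat.choose_pos (by omega)
  apply Nat.le_of_mul_le_mul_right _ h3
  rw [← h2]
  calc _ ≤ (((V.powersetCard t).filter P).card * (V.card - t).choose (R - t)) * R.choose t :=
        Nat.mul_le_mul_right _ h1
    _ = _ := by ring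

open Finset Classical in
/-- Forward neighbours. -/
noncomputable def fwd {n : ℕ} (G : SimpleGraph (Fin n)) (r : Fin n) : Finset (Fin n) :=
  univ.filter fun v => r < v ∧ G.Adj r v

open Finset Classical in
/-- Common backward neighbours. -/
noncomputable def cbk {n : ℕ} (G : SimpleGraph (Fin n)) (c : Finset (Fin n)) : Finset (Fin n) :=
  univ.filter fun r => c ⊆ fwd G r

open Finset Classical in
theorem embed_s2 (t h x b l n : ℕ) (hx : x ≤ h) (hb : 0 < b)
    (H : SimpleGraph (Fin h))
    (hbip : ∀ u v : Fin h, H.Adj u v → u < v → (u : ℕ) < x ∧ x ≤ (v : ℕ))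
    (hdeg : ∀ u : Fin h, (u : ℕ) < x → (H.neighborSet u).ncard ≤ t)
    (G : SimpleGraph (Fin n)) (r : Fin n) (Z : Finset (Fin n)) (hZ : Z ⊆ fwd G r)
    (hZc : Z.card = h + t) (L : Finset (Fin l)) (hLx : x ≤ L.card)
    (hL : ∀ c ⊆ Z, c.card = t → lftLev b l (cbk G c) r = L) : ordContains G H := by
  set e := Z.orderEmbOfFin hZc with he
  have heZ : ∀ i, e i ∈ Z := fun i => Finset.orderEmbOfFin_mem Z hZc i
  set idx : Fin h → Fin (h + t) := Fin.castAdd t with hidx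
  have hex : ∀ u : Fin h, ∃ c ⊆ Z, c.card = t ∧
      ((u : ℕ) < x → ∀ v, H.Adj u v → e (idx v) ∈ c) := by
    intro u
    by_cases hu : (u : ℕ) < x
    · have h1 : ((H.neighborSet u).toFinset.image fun v => e (idx v)).card ≤ t := by
        refine card_image_le.trans ?_
        have := hdeg u hu
        rwa [Set.ncard_eq_toFinset_card'] at this
      obtain ⟨c, hc1, hc2, hc3⟩ := Finset.exists_subsuperset_card_eq
        (s := (H.neighborSet u).toFinset.image fun v => e (idx v)) (t := Z) (n := t)
        (by intro a ha
            rw [mem_image] at ha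
            obtain ⟨v, _, rfl⟩ := ha
            exact heZ _) h1 (by omega)
      refine ⟨c, hc2, hc3, fun _ v hv => hc1 ?_⟩
      rw [mem_image]
      exact ⟨v, by simpa using hv, rfl⟩
    · obtain ⟨c, hc1, hc2⟩ := Finset.exists_subset_card_eq (show t ≤ Z.card by omega)
      exact ⟨c, hc1, hc2, fun h => absurd h hu⟩
  choose c hcZ hct hcadj using hex
  -- levels
  set g := L.orderEmbOfFin rfl with hg
  have hσ : ∀ u : Fin h, ∀ hu : (u : ℕ) < x, ∃ s : Fin n, s ∈ cbk G (c u) ∧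
      (s : ℕ) / b ^ ((g ⟨L.card - 1 - u, by omega⟩).val + 1)
        = (r : ℕ) / b ^ ((g ⟨L.card - 1 - u, by omega⟩).val + 1) ∧
      (s : ℕ) / b ^ (g ⟨L.card - 1 - u, by omega⟩).val
        < (r : ℕ) / b ^ (g ⟨L.card - 1 - u, by omega⟩).val := by
    intro u hu
    have hm : g ⟨L.card - 1 - u, by omega⟩ ∈ L := Finset.orderEmbOfFin_mem L rfl _
    generalize hgg : g ⟨L.card - 1 - u, by omega⟩ = j at *
    rw [← hL (c u) (hcZ u) (hct u)] at hm
    simp only [lftLev, mem_filter, mem_univ, true_and] at hm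
    exact hm
  choose σ hσ1 hσ2 hσ3 using hσ
  have hσr : ∀ u hu, σ u hu < r := by
    intro u hu
    by_contra hcon
    push Not at hcon
    have := Nat.div_le_div_right (c := b ^ (g ⟨L.card - 1 - u, by omega⟩).val)
      (show (r : ℕ) ≤ σ u hu from hcon)
    have := hσ3 u hu
    omega
  have hσm : ∀ u hu v hv, u < v → σ u hu < σ v hv := by
    intro u hu v hv huv
    have hlt : (g ⟨L.card - 1 - v, by omega⟩) < (g ⟨L.card - 1 - u, by omega⟩) := by
      apply g.strictMono
      have : (u : ℕ) < v := huv
      simp only [Fin.mk_lt_mk]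
      omega
    have a1 := hσ2 v hv
    have a2 := hσ3 u hu
    generalize g ⟨L.card - 1 - u, by omega⟩ = j1 at *
    generalize g ⟨L.card - 1 - v, by omega⟩ = j2 at *
    have hjj : (j2 : ℕ) + 1 ≤ j1 := hlt
    obtain ⟨d, hd⟩ := Nat.exists_eq_add_of_le hjj
    have a3 : (σ v hv : ℕ) / b ^ (j1 : ℕ) = (r : ℕ) / b ^ (j1 : ℕ) := by
      rw [hd, pow_add, ← Nat.div_div_eq_div_mul, ← Nat.div_div_eq_div_mul, a1]
    by_contra hcon
    push Not at hcon
    have := Nat.div_le_div_right (c := b ^ (j1 : ℕ))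
      (show (σ v hv : ℕ) ≤ σ u hu from hcon)
    omega
  have hre : ∀ i, r < e i := by
    intro i
    have := hZ (heZ i)
    simp only [fwd, mem_filter] at this
    exact this.2.1
  refine ⟨fun u => if hu : (u : ℕ) < x then σ u hu else e (idx u), ?_, ?_⟩
  · intro u v huv
    have huv' : (u : ℕ) < v := huv
    by_cases hu : (u : ℕ) < x
    · by_cases hv : (v : ℕ) < x
      · simp only [hu, hv, dif_pos]
        exact hσm u hu v hv huv
      · simp only [hu, hv, dif_pos, dif_neg, not_false_iff]
        exact (hσr u hu).trans (hre _)
    · have hv : ¬ (v : ℕ) < x := by omega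
      simp only [hu, hv, dif_neg, not_false_iff]
      apply e.strictMono
      exact huv
  · have main : ∀ u v : Fin h, H.Adj u v → u < v →
        G.Adj (if hu : (u : ℕ) < x then σ u hu else e (idx u))
          (if hu : (v : ℕ) < x then σ v hu else e (idx v)) := by
      intro u v hadj huv
      obtain ⟨hu, hv⟩ := hbip u v hadj huv
      have hv' : ¬ (v : ℕ) < x := by omega
      simp only [hu, hv', dif_pos, dif_neg, not_false_iff]
      have h1 := hσ1 u hu
      simp only [cbk, mem_filter, mem_univ, true_and] at h1
      have h2 := h1 (hcadj u hu v hadj)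
      simp only [fwd, mem_filter, mem_univ, true_and] at h2
      exact h2.2
    intro u v hadj
    rcases lt_trichotomy u v with huv | huv | huv
    · exact main u v hadj huv
    · subst huv; exact absurd hadj (H.loopless.irrefl u)
    · exact (main v u hadj.symm huv).symm

open Finset Classical in
theorem edge_le {n : ℕ} (G : SimpleGraph (Fin n)) :
    G.edgeSet.ncard ≤ ∑ r, (fwd G r).card := by
  have h1 : G.edgeSet ⊆
      (((univ : Finset (Fin n)).sigma fun r => fwd G r).image fun p => s(p.1, p.2) : Finset _) := by
    intro e he
    induction e with
    | _ u v =>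
      rw [SimpleGraph.mem_edgeSet] at he
      simp only [coe_image, Set.mem_image, mem_coe, mem_sigma, mem_univ, true_and, fwd, mem_filter]
      rcases lt_trichotomy u v with huv | huv | huv
      · exact ⟨⟨u, v⟩, ⟨huv, he⟩, rfl⟩
      · subst huv; exact absurd he (G.loopless.irrefl u)
      · exact ⟨⟨v, u⟩, ⟨huv, he.symm⟩, Sym2.eq_swap⟩
  calc _ ≤ _ := Set.ncard_le_ncard h1 (Finset.finite_toSet _)
    _ ≤ _ := by
      rw [Set.ncard_coe_finset]
      refine card_image_le.trans ?_
      rw [card_sigma]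

open Finset Classical in
theorem count_main (t h x l : ℕ) (ht : 1 ≤ t) (hx : x ≤ h)
    (H : SimpleGraph (Fin h))
    (hbip : ∀ u v : Fin h, H.Adj u v → u < v → (u : ℕ) < x ∧ x ≤ (v : ℕ))
    (hdeg : ∀ u : Fin h, (u : ℕ) < x → (H.neighborSet u).ncard ≤ t) :
    ∃ K : ℕ, ∀ n b : ℕ, 0 < n → 0 < b → n ≤ b ^ l → ∀ G : SimpleGraph (Fin n),
      ¬ ordContains G H → G.edgeSet.ncard ^ t ≤ K * n ^ (2 * t - 1) * b ^ x := by
  obtain ⟨R0, hR0⟩ := ramsey_aux t (Finset (Fin l)) (h + t)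
  set R := R0 + 2 * t with hR
  refine ⟨2 ^ t * t.factorial * R.choose t * 2 ^ l + R ^ t, fun n b hn hb hnb G hG => ?_⟩
  obtain ⟨bad, hbad⟩ : ∃ bad : Fin n → Finset (Fin n) → Prop,
      ∀ r c, bad r c ↔ (lftLev b l (cbk G c) r).card < x := ⟨_, fun _ _ => Iff.rfl⟩
  have hrow : ∀ r, (fwd G r).card ^ t ≤ 2 ^ t * t.factorial * R.choose t *
      (((fwd G r).powersetCard t).filter (bad r)).card + R ^ t := by
    intro r
    rcases lt_or_ge (fwd G r).card R with hlt | hge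
    · exact (Nat.pow_le_pow_left hlt.le t).trans (Nat.le_add_left _ _)
    · have hs := supersat t R (by omega) (fwd G r) hge (bad r) (by
        intro Z hZ hZc
        by_contra hcon
        push Not at hcon
        obtain ⟨S, hSZ, hSc, L, hL⟩ := hR0 (Fin n) Z (by omega)
          (fun c => lftLev b l (cbk G c) r)
        obtain ⟨c0, hc0, hc0c⟩ := Finset.exists_subset_card_eq (show t ≤ S.card by omega)
        have hLx : x ≤ L.card := by
          have h1 := hcon c0 (hc0.trans hSZ) hc0c
          have h2 := hL c0 hc0 hc0c
          rw [hbad, not_lt] at h1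
          rwa [h2] at h1
        exact hG (embed_s2 t h x b l n hx hb H hbip hdeg G r S (hSZ.trans hZ) hSc L hLx hL))
      have h1 : ((fwd G r).card + 1 - t) ^ t ≤ t.factorial * (fwd G r).card.choose t := by
        rw [← Nat.descFactorial_eq_factorial_mul_choose]
        exact Nat.pow_sub_le_descFactorial _ _
      have h2 : (fwd G r).card ≤ 2 * ((fwd G r).card + 1 - t) := by omega
      calc (fwd G r).card ^ t ≤ (2 * ((fwd G r).card + 1 - t)) ^ t := Nat.pow_le_pow_left h2 t
        _ = 2 ^ t * ((fwd G r).card + 1 - t) ^ t := mul_pow _ _ _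
        _ ≤ 2 ^ t * (t.factorial * (R.choose t *
              (((fwd G r).powersetCard t).filter (bad r)).card)) := by
            gcongr
            exact h1.trans (Nat.mul_le_mul_left _ hs)
        _ ≤ _ := by
            rw [← mul_assoc, ← mul_assoc]
            exact Nat.le_add_right _ _
  have hbadsum : ∑ r, (((fwd G r).powersetCard t).filter (bad r)).card
      ≤ n ^ t * (2 ^ l * b ^ x) := by
    have h1 : ∀ r, (((fwd G r).powersetCard t).filter (bad r)).card =
        ∑ c ∈ (univ : Finset (Fin n)).powersetCard t, if c ⊆ fwd G r ∧ bad r c then 1 else 0 := by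
      intro r
      rw [← card_filter]
      congr 1
      ext c
      simp only [mem_filter, mem_powersetCard, subset_univ, true_and]
      tauto
    simp_rw [h1]
    rw [sum_comm]
    calc _ ≤ ∑ c ∈ (univ : Finset (Fin n)).powersetCard t, 2 ^ l * b ^ x := by
          apply sum_le_sum
          intro c _
          rw [← card_filter]
          refine le_trans (le_of_eq ?_) (few_left b l x n hb hnb (cbk G c))
          congr 1
          ext r
          rw [mem_filter, mem_filter, hbad]
          simp only [mem_univ, true_and, cbk, mem_filter]
      _ ≤ _ := by
          rw [sum_const, smul_eq_mul, card_powersetCard, card_univ, Fintype.card_fin]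
          apply Nat.mul_le_mul_right
          exact Nat.choose_le_pow _ _
  have hsum : ∑ r, (fwd G r).card ^ t ≤
      2 ^ t * t.factorial * R.choose t * (n ^ t * (2 ^ l * b ^ x)) + n * R ^ t := by
    calc _ ≤ ∑ r : Fin n, (2 ^ t * t.factorial * R.choose t *
      (((fwd G r).powersetCard t).filter (bad r)).card + R ^ t) := sum_le_sum fun r _ => hrow r
      _ = 2 ^ t * t.factorial * R.choose t *
        (∑ r, (((fwd G r).powersetCard t).filter (bad r)).card) + n * R ^ t := by
          rw [sum_add_distrib, mul_sum]; simp
      _ ≤ _ := by gcongr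
  obtain ⟨t', rfl⟩ := Nat.exists_eq_add_of_le' ht
  have hpm : (∑ r, (fwd G r).card) ^ (t' + 1) ≤ n ^ t' * ∑ r, (fwd G r).card ^ (t' + 1) := by
    have h := pow_sum_le_card_mul_sum_pow (s := (univ : Finset (Fin n)))
      (f := fun r => (fwd G r).card) (fun _ _ => Nat.zero_le _) t'
    simpa using h
  have hbx : 1 ≤ b ^ x := Nat.one_le_pow _ _ hb
  have hnn : n ≤ n ^ (t' + 1) := Nat.le_self_pow (by omega) n
  calc G.edgeSet.ncard ^ (t' + 1) ≤ (∑ r, (fwd G r).card) ^ (t' + 1) :=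
        Nat.pow_le_pow_left (edge_le G) _
    _ ≤ n ^ t' * ∑ r, (fwd G r).card ^ (t' + 1) := hpm
    _ ≤ n ^ t' * (2 ^ (t' + 1) * (t' + 1).factorial * R.choose (t' + 1) *
          (n ^ (t' + 1) * (2 ^ l * b ^ x)) + n ^ (t' + 1) * R ^ (t' + 1) * b ^ x) := by
        apply Nat.mul_le_mul_left
        refine hsum.trans ?_
        apply Nat.add_le_add_left
        calc n * R ^ (t' + 1) ≤ n ^ (t' + 1) * R ^ (t' + 1) := Nat.mul_le_mul_right _ hnn
          _ ≤ _ := Nat.le_mul_of_pos_right _ hbx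
    _ = _ := by
        have : 2 * (t' + 1) - 1 = t' + (t' + 1) := by omega
        rw [this, pow_add n t' (t' + 1)]
        ring

/-- Let `H` be an ordered bipartite graph on `Fin h`, with vertex classes
`X = {v : v < x}` and `Y = {v : x ≤ v}` (every edge goes between `X` and `Y`), such that every
vertex of `X` has degree at most `t`. Then `ex_<(n, H) ≤ C · n^(2 - 1/t + ε)`. -/
theorem statement2 (t : ℕ) (ht : 1 ≤ t) (ε : ℝ) (hε : 0 < ε) (h x : ℕ) (hx : x ≤ h)
    (H : SimpleGraph (Fin h))
    (hbip : ∀ u v : Fin h, H.Adj u v → u < v → (u : ℕ) < x ∧ x ≤ (v : ℕ))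
    (hdeg : ∀ u : Fin h, (u : ℕ) < x → (H.neighborSet u).ncard ≤ t) :
    ∃ C : ℝ, 0 < C ∧ ∀ n : ℕ, 0 < n →
      (ordEx n H : ℝ) ≤ C * (n : ℝ) ^ (2 - 1 / (t : ℝ) + ε) := by
  obtain ⟨l', hl'⟩ := exists_nat_gt ((x : ℝ) / ε)
  set l := l' + 1 with hl
  obtain ⟨K, hK⟩ := count_main t h x l ht hx H hbip hdeg
  have htpos : (0 : ℝ) < t := by exact_mod_cast ht
  have hlpos : (0 : ℝ) < l := by positivity
  refine ⟨((K : ℝ) + 1) * 2 ^ x, by positivity, fun n hn => ?_⟩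
  have hn1 : (1 : ℝ) ≤ n := by exact_mod_cast hn
  have hn0 : (0 : ℝ) < n := by linarith
  set y : ℝ := (n : ℝ) ^ (1 / (l : ℝ)) with hy
  have hy1 : 1 ≤ y := Real.one_le_rpow hn1 (by positivity)
  set b := ⌈y⌉₊ with hbdef
  have hyb : y ≤ b := Nat.le_ceil y
  have hb2 : (b : ℝ) ≤ 2 * y := by
    have := Nat.ceil_lt_add_one (show 0 ≤ y by linarith)
    linarith
  have hb : 0 < b := Nat.ceil_pos.mpr (by linarith)
  have hyl : y ^ l = n := by
    rw [hy, ← Real.rpow_natCast, ← Real.rpow_mul hn0.le]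
    rw [one_div, inv_mul_cancel₀ hlpos.ne', Real.rpow_one]
  have hnb : n ≤ b ^ l := by
    have : (n : ℝ) ≤ (b : ℝ) ^ l := by
      rw [← hyl]; gcongr
    exact_mod_cast this
  have hbnd : ∀ G : SimpleGraph (Fin n), ¬ ordContains G H →
      (G.edgeSet.ncard : ℝ) ≤ ((K : ℝ) + 1) * 2 ^ x * (n : ℝ) ^ (2 - 1 / (t : ℝ) + ε) := by
    intro G hG
    have h1 := hK n b hn hb hnb G hG
    have h2 : (G.edgeSet.ncard : ℝ) ^ t ≤ K * (n : ℝ) ^ (2 * t - 1) * (b : ℝ) ^ x := by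
      exact_mod_cast h1
    have hC1 : (1 : ℝ) ≤ ((K : ℝ) + 1) * 2 ^ x := by
      have : (1 : ℝ) ≤ 2 ^ x := one_le_pow₀ (by norm_num)
      have hK0 : (0 : ℝ) ≤ K := Nat.cast_nonneg K
      nlinarith
    refine le_of_pow_le_pow_left₀ (by omega : t ≠ 0) (by positivity) (h2.trans ?_)
    have h3 : (b : ℝ) ^ x ≤ 2 ^ x * (n : ℝ) ^ ε := by
      calc (b : ℝ) ^ x ≤ (2 * y) ^ x := by gcongr
        _ = 2 ^ x * y ^ x := mul_pow _ _ _
        _ ≤ _ := by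
          gcongr
          rw [hy, ← Real.rpow_natCast, ← Real.rpow_mul hn0.le]
          apply Real.rpow_le_rpow_of_exponent_le hn1
          rw [one_div_mul_eq_div, div_le_iff₀ hlpos]
          rw [div_lt_iff₀ hε] at hl'
          have : (l : ℝ) = l' + 1 := by rw [hl]; push_cast; ring
          rw [this]
          nlinarith
    have h4 : (n : ℝ) ^ (2 * t - 1) * (n : ℝ) ^ ε ≤ ((n : ℝ) ^ (2 - 1 / (t : ℝ) + ε)) ^ t := by
      rw [← Real.rpow_natCast, ← Real.rpow_natCast, ← Real.rpow_mul hn0.le, ← Real.rpow_add hn0]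
      apply Real.rpow_le_rpow_of_exponent_le hn1
      rw [Nat.cast_sub (by omega)]
      push_cast
      have : (2 - 1 / (t : ℝ) + ε) * t = 2 * t - 1 + ε * t := by
        field_simp
      rw [this]
      have ht1 : (1 : ℝ) ≤ t := by exact_mod_cast ht
      nlinarith
    calc (K : ℝ) * (n : ℝ) ^ (2 * t - 1) * (b : ℝ) ^ x
        ≤ (K : ℝ) * (n : ℝ) ^ (2 * t - 1) * (2 ^ x * (n : ℝ) ^ ε) := by gcongr
      _ = (K * 2 ^ x) * ((n : ℝ) ^ (2 * t - 1) * (n : ℝ) ^ ε) := by ring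
      _ ≤ (((K : ℝ) + 1) * 2 ^ x) ^ t * ((n : ℝ) ^ (2 - 1 / (t : ℝ) + ε)) ^ t := by
          gcongr
          calc (K : ℝ) * 2 ^ x ≤ (((K : ℝ) + 1) * 2 ^ x) := by gcongr; linarith
            _ ≤ _ := le_self_pow₀ hC1 (by omega)
      _ = _ := by rw [← mul_pow]
  rcases Set.eq_empty_or_nonempty
    {e : ℕ | ∃ G : SimpleGraph (Fin n), ¬ ordContains G H ∧ G.edgeSet.ncard = e} with he | hne
  · unfold ordEx
    rw [he]
    simp
    positivity
  · have hbdd : BddAbove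
        {e : ℕ | ∃ G : SimpleGraph (Fin n), ¬ ordContains G H ∧ G.edgeSet.ncard = e} := by
      refine ⟨⌊((K : ℝ) + 1) * 2 ^ x * (n : ℝ) ^ (2 - 1 / (t : ℝ) + ε)⌋₊, ?_⟩
      rintro e ⟨G, hG, rfl⟩
      exact Nat.le_floor (hbnd G hG)
    obtain ⟨G, hG, hGe⟩ := Nat.sSup_mem hne hbdd
    unfold ordEx
    rw [← hGe]
    exact hbnd G hG
end

section
/- Let k ≥ 2 be an integer, let ε > 0, and let H be an ordered graph whose underlying graph is a cycle of length 2k and whose interval chromatic number is 2. Then there is a constant C such that for every positive integer n, ex_<(n, H) ≤ C · n^{3/2 + ε}. -/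
open Classical in
def rb (S : Finset ℕ) (K l s : ℕ) : Prop :=
  ∃ t ∈ S, t / K ^ (l + 1) = s / K ^ (l + 1) ∧ s / K ^ l < t / K ^ l

lemma rb_succ (S : Finset ℕ) (K l s : ℕ) :
    rb S K (l + 1) s ↔ rb (S.image (· / K)) K l (s / K) := by
  unfold rb
  simp only [Finset.mem_image, exists_exists_and_eq_and, Nat.div_div_eq_div_mul]
  have e1 : K * K ^ (l + 1) = K ^ (l + 1 + 1) := by ring
  have e2 : K * K ^ l = K ^ (l + 1) := by ring
  rw [e1, e2]

open Classical in
lemma fiber_sum (S : Finset ℕ) (K : ℕ) (hK : 0 < K) (u : ℕ) :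
    ∑ s ∈ S with s / K = u, (if rb S K 0 s then (1 / K : ℝ) else 1) ≤ 2 := by
  set F := S.filter (fun s => s / K = u) with hF
  by_cases hne : F.Nonempty
  · have hKr : (0:ℝ) < K := by exact_mod_cast hK
    have hM := F.max'_mem hne
    set M := F.max' hne with hMdef
    have hcard : F.card ≤ K := by
      have : F ⊆ Finset.Ico (K * u) (K * u + K) := by
        intro s hs
        rw [hF, Finset.mem_filter] at hs
        rw [Finset.mem_Ico]
        have h1 := Nat.div_add_mod s K
        have h2 := Nat.mod_lt s hK
        rw [hs.2] at h1
        omega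
      have := Finset.card_le_card this
      simpa using this
    calc ∑ s ∈ F, (if rb S K 0 s then (1 / K : ℝ) else 1)
        ≤ ∑ s ∈ F, ((1 / K : ℝ) + if s = M then 1 else 0) := by
          apply Finset.sum_le_sum
          intro s hs
          by_cases hsM : s = M
          · have : (0:ℝ) ≤ 1 / K := by positivity
            have h1 : (1 / K : ℝ) ≤ 1 := by
              rw [div_le_one hKr]; exact_mod_cast hK
            rw [if_pos hsM]
            split_ifs <;> linarith
          · have hlt : s < M := lt_of_le_of_ne (F.le_max' s hs) hsM
            have hr : rb S K 0 s := by
              rw [hF, Finset.mem_filter] at hs hM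
              refine ⟨M, hM.1, ?_, ?_⟩
              · simp [hs.2, hM.2]
              · simpa using hlt
            simp [hr, hsM]
      _ ≤ 2 := by
          rw [Finset.sum_add_distrib, Finset.sum_const, Finset.sum_ite_eq' F M, if_pos hM, nsmul_eq_mul]
          have : (F.card : ℝ) * (1 / K) ≤ 1 := by
            rw [mul_one_div, div_le_one hKr]; exact_mod_cast hcard
          linarith
  · rw [Finset.not_nonempty_iff_eq_empty] at hne
    rw [hne]; simp

open Classical in
lemma weight_sum (K : ℕ) (hK : 0 < K) (L : ℕ) : ∀ S : Finset ℕ, (∀ s ∈ S, s < K ^ L) →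
    ∑ s ∈ S, ∏ l ∈ Finset.range L, (if rb S K l s then (1 / K : ℝ) else 1) ≤ 2 ^ L := by
  induction L with
  | zero =>
    intro S hS
    have : S ⊆ {0} := by
      intro s hs
      have := hS s hs
      simp at this ⊢
      exact this
    have := Finset.card_le_card this
    simp at this
    simpa using this
  | succ L ih =>
    intro S hS
    have ih' := ih (S.image (· / K)) (by
      intro s hs
      rw [Finset.mem_image] at hs
      obtain ⟨t, ht, rfl⟩ := hs
      have := hS t ht
      rw [Nat.div_lt_iff_lt_mul hK]
      rwa [pow_succ] at this)
    rw [← Finset.sum_fiberwise_of_maps_to (g := fun s => s / K) (t := S.image (· / K))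
      (fun s hs => Finset.mem_image_of_mem _ hs)]
    calc _ ≤ ∑ u ∈ S.image (· / K), (∏ l ∈ Finset.range L,
              (if rb (S.image (· / K)) K l u then (1 / K : ℝ) else 1)) * 2 := by
          apply Finset.sum_le_sum
          intro u hu
          have : ∀ s ∈ S.filter (fun s => s / K = u),
            ∏ l ∈ Finset.range (L+1), (if rb S K l s then (1 / K : ℝ) else 1) =
            (∏ l ∈ Finset.range L,
              (if rb (S.image (· / K)) K l u then (1 / K : ℝ) else 1)) *
              (if rb S K 0 s then (1 / K : ℝ) else 1) := by
            intro s hs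
            rw [Finset.mem_filter] at hs
            rw [Finset.prod_range_succ']
            congr 1
            apply Finset.prod_congr rfl
            intro l _
            simp only [rb_succ, hs.2]
          rw [Finset.sum_congr rfl this, ← Finset.mul_sum]
          apply mul_le_mul_of_nonneg_left (fiber_sum S K hK u)
          apply Finset.prod_nonneg
          intro l _
          split_ifs <;> positivity
      _ ≤ 2 ^ (L + 1) := by
          rw [← Finset.sum_mul, pow_succ]
          linarith

open Classical in
lemma bad_count (K : ℕ) (hK : 0 < K) (L m : ℕ) (S : Finset ℕ) (hS : ∀ s ∈ S, s < K ^ L) :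
    (S.filter (fun s => ((Finset.range L).filter (fun l => rb S K l s)).card ≤ m)).card
      ≤ 2 ^ L * K ^ m := by
  have hKr : (1:ℝ) ≤ K := by exact_mod_cast hK
  set B := (S.filter (fun s => ((Finset.range L).filter (fun l => rb S K l s)).card ≤ m)) with hB
  have h1 : (B.card : ℝ) * (1 / K : ℝ) ^ m ≤ 2 ^ L := by
    calc (B.card : ℝ) * (1 / K : ℝ) ^ m = ∑ s ∈ B, (1 / K : ℝ) ^ m := by simp
      _ ≤ ∑ s ∈ B, ∏ l ∈ Finset.range L, (if rb S K l s then (1 / K : ℝ) else 1) := by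
          apply Finset.sum_le_sum
          intro s hs
          rw [Finset.prod_ite]
          simp only [Finset.prod_const, one_pow, mul_one]
          apply pow_le_pow_of_le_one (by positivity)
          · rw [div_le_one (by linarith)]; exact hKr
          · rw [hB, Finset.mem_filter] at hs
            exact hs.2
      _ ≤ ∑ s ∈ S, ∏ l ∈ Finset.range L, (if rb S K l s then (1 / K : ℝ) else 1) := by
          apply Finset.sum_le_sum_of_subset_of_nonneg (Finset.filter_subset _ _)
          intro s _ _
          apply Finset.prod_nonneg
          intro l _
          split_ifs <;> positivity
      _ ≤ 2 ^ L := weight_sum K hK L S hS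
  have h2 : (B.card : ℝ) ≤ 2 ^ L * K ^ m := by
    rw [one_div, inv_pow, ← div_eq_mul_inv, div_le_iff₀ (by positivity)] at h1
    exact h1
  exact_mod_cast h2

open Classical in
lemma chain_exists {V Γ : Type} [Fintype Γ] (χ : V → V → Γ) (A : Finset V) (hA : A.Nonempty) :
    ∃ (S : ℕ → Finset V) (c : ℕ → V) (a : ℕ → Γ), S 0 = A ∧ (∀ i, c i ∈ S i) ∧
      (∀ i, S (i + 1) ⊆ S i) ∧ (∀ i, ∀ v ∈ S (i + 1), χ (c i) v = a i) ∧
      (∀ i, A.card ≤ Fintype.card Γ ^ i * (S i).card) := by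
  have step : ∀ B : {B : Finset V // B.Nonempty}, ∃ (v : V) (g : Γ) (B' : {B : Finset V // B.Nonempty}),
      v ∈ B.1 ∧ B'.1 ⊆ B.1 ∧ (∀ w ∈ B'.1, χ v w = g) ∧ B.1.card ≤ Fintype.card Γ * B'.1.card := by
    rintro ⟨B, v, hv⟩
    have : ∃ g : Γ, B.card ≤ Fintype.card Γ * (B.filter (fun w => χ v w = g)).card := by
      by_contra! h
      have hs : ∑ g : Γ, (B.filter (fun w => χ v w = g)).card = B.card := by
        exact (Finset.card_eq_sum_card_fiberwise (f := χ v) (fun _ _ => Finset.mem_univ _)).symm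
      have hlt : ∑ g : Γ, Fintype.card Γ * (B.filter (fun w => χ v w = g)).card
          < ∑ g : Γ, B.card := by
        apply Finset.sum_lt_sum_of_nonempty
        · exact ⟨χ v v, Finset.mem_univ _⟩
        · intro g _; exact h g
      rw [← Finset.mul_sum, hs] at hlt
      simp at hlt
    obtain ⟨g, hg⟩ := this
    refine ⟨v, g, ⟨B.filter (fun w => χ v w = g), ?_⟩, hv, Finset.filter_subset _ _, ?_, hg⟩
    · rw [← Finset.card_pos]
      have : 0 < B.card := Finset.card_pos.2 ⟨v, hv⟩
      exact Nat.pos_of_mul_pos_left (lt_of_lt_of_le this hg)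
    · intro w hw
      exact (Finset.mem_filter.1 hw).2
  choose fv fg fB h1 h2 h3 h4 using step
  let S : ℕ → {B : Finset V // B.Nonempty} := fun i => fB^[i] ⟨A, hA⟩
  have hS : ∀ i, S (i + 1) = fB (S i) := fun i => Function.iterate_succ_apply' _ _ _
  refine ⟨fun i => (S i).1, fun i => fv (S i), fun i => fg (S i), rfl, fun i => h1 _, ?_, ?_, ?_⟩
  · intro i; simp only [hS]; exact h2 _
  · intro i; simp only [hS]; exact h3 _
  · intro i
    induction i with
    | zero => simp [S]
    | succ i ih =>
      refine ih.trans ?_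
      simp only [hS]
      rw [pow_succ, mul_assoc]
      exact Nat.mul_le_mul_left _ (h4 _)

lemma pigeon (h t T L : ℕ) (hT : T = 2 * h * t) (hh : 0 < h) (ht : 0 < t)
    (hL : 2 * t * (h * 2 ^ T) ≤ L)
    (a : ℕ → Finset ℕ) (ha : ∀ i < T, a i ⊆ Finset.range L) (hc : ∀ i < T, L ≤ t * (a i).card) :
    ∃ D ⊆ Finset.range T, ∃ B : Finset ℕ, D.card = h ∧ B.card = h ∧ ∀ i ∈ D, B ⊆ a i := by
  classical
  let D : ℕ → Finset ℕ := fun l => (Finset.range T).filter (fun i => l ∈ a i)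
  let good := (Finset.range L).filter (fun l => h ≤ (D l).card)
  have hTpos : 0 < T := by rw [hT]; positivity
  have hsum : ∑ l ∈ Finset.range L, (D l).card = ∑ i ∈ Finset.range T, (a i).card := by
    have := Finset.sum_card_bipartiteAbove_eq_sum_card_bipartiteBelow
      (s := Finset.range L) (t := Finset.range T) (fun l i => l ∈ a i)
    unfold Finset.bipartiteAbove Finset.bipartiteBelow at this
    rw [show (∑ l ∈ Finset.range L, (D l).card) = _ from this]
    apply Finset.sum_congr rfl
    intro i hi
    congr 1
    ext l
    simp only [Finset.mem_filter]
    exact ⟨fun x => x.2, fun x => ⟨ha i (Finset.mem_range.1 hi) x, x⟩⟩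
  have hub : ∑ l ∈ Finset.range L, (D l).card ≤ T * good.card + h * L := by
    calc _ ≤ ∑ l ∈ Finset.range L, ((if h ≤ (D l).card then T else 0) + h) := by
          apply Finset.sum_le_sum
          intro l _
          have : (D l).card ≤ T := by
            have := Finset.card_le_card (Finset.filter_subset (fun i => l ∈ a i) (Finset.range T))
            simpa using this
          split_ifs <;> omega
      _ = _ := by
          rw [Finset.sum_add_distrib, ← Finset.sum_filter]
          simp only [Finset.sum_const, smul_eq_mul, Finset.card_range]
          show good.card * T + L * h = _
          ring
  have hlb : T * L ≤ t * ∑ l ∈ Finset.range L, (D l).card := by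
    rw [hsum, Finset.mul_sum]
    calc T * L = ∑ i ∈ Finset.range T, L := by simp
      _ ≤ _ := Finset.sum_le_sum (fun i hi => hc i (Finset.mem_range.1 hi))
  have h1 : T * L ≤ t * (T * good.card + h * L) := hlb.trans (Nat.mul_le_mul_left _ hub)
  have h2 : L ≤ 2 * t * good.card := by
    have : (h * t) * L ≤ (h * t) * (2 * t * good.card) := by
      rw [hT] at h1; nlinarith
    exact Nat.le_of_mul_le_mul_left this (by positivity)
  have h3 : h * 2 ^ T ≤ good.card :=
    Nat.le_of_mul_le_mul_left (hL.trans h2) (by positivity)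
  obtain ⟨D0, hD0, hB⟩ := Finset.exists_le_card_fiber_of_mul_le_card_of_maps_to
    (s := good) (t := (Finset.range T).powerset) (f := D) (n := h)
    (fun l _ => Finset.mem_powerset.2 (Finset.filter_subset _ _)) ⟨∅, by simp⟩
    (by rw [Finset.card_powerset, Finset.card_range, mul_comm]; exact h3)
  obtain ⟨B, hBs, hBc⟩ := Finset.exists_subset_card_eq hB
  have hB0 : ∃ l ∈ good, D l = D0 := by
    have : (0:ℕ) < _ := lt_of_lt_of_le hh hB
    obtain ⟨l, hl⟩ := Finset.card_pos.1 this
    exact ⟨l, (Finset.mem_filter.1 hl)⟩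
  obtain ⟨l, hl, hlD⟩ := hB0
  have : h ≤ D0.card := by rw [← hlD]; exact (Finset.mem_filter.1 hl).2
  obtain ⟨D1, hD1, hD1c⟩ := Finset.exists_subset_card_eq this
  refine ⟨D1, hD1.trans (Finset.mem_powerset.1 hD0), B, hD1c, hBc, ?_⟩
  intro i hi l hl
  have h5 := (Finset.mem_filter.1 (hBs hl)).2
  have : i ∈ D l := by rw [h5]; exact hD1 hi
  exact (Finset.mem_filter.1 this).2

open Classical in
noncomputable def comN (E : ℕ → ℕ → Prop) (n c c' : ℕ) : Finset ℕ :=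
  (Finset.range n).filter (fun t => E t c ∧ E t c')

open Classical in
noncomputable def pat (E : ℕ → ℕ → Prop) (n K L s c c' : ℕ) : Finset ℕ :=
  if c = c' then ∅ else (Finset.range L).filter (fun l => rb (comN E n c c') K l s)

open Classical in
lemma pat_subset (E : ℕ → ℕ → Prop) (n K L s c c' : ℕ) : pat E n K L s c c' ⊆ Finset.range L := by
  unfold pat
  split_ifs
  · simp
  · exact Finset.filter_subset _ _

open Classical in
lemma bad_pair (E : ℕ → ℕ → Prop) (n K L m c c' : ℕ) (hK : 0 < K) (hn : n ≤ K ^ L) :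
    ((comN E n c c').filter (fun s => (pat E n K L s c c').card ≤ m)).card
      ≤ 2 ^ L * K ^ m + if c = c' then n else 0 := by
  by_cases h : c = c'
  · rw [if_pos h]
    have h1 := Finset.card_le_card (Finset.filter_subset
      (fun s => (pat E n K L s c c').card ≤ m) (comN E n c c'))
    have h2 : (comN E n c c').card ≤ n := by
      have := Finset.card_le_card (Finset.filter_subset (fun t => E t c ∧ E t c') (Finset.range n))
      simpa [comN] using this
    omega
  · rw [if_neg h]
    have := bad_count K hK L m (comN E n c c') (by
      intro s hs
      exact lt_of_lt_of_le (Finset.mem_range.1 (Finset.mem_filter.1 hs).1) hn)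
    simpa [pat, h] using this

open Classical in
lemma good_row (E : ℕ → ℕ → Prop) (n K L m X : ℕ) (hK : 0 < K) (hn : n ≤ K ^ L)
    (he : 2 * X * (2 ^ L * K ^ m) * n ^ 3 <
      (∑ s ∈ Finset.range n, ((Finset.range n).filter (E s)).card) ^ 2) :
    ∃ s < n, X * (((Finset.range n).filter (E s) ×ˢ (Finset.range n).filter (E s)).filter
        (fun p => (pat E n K L s p.1 p.2).card ≤ m)).card < ((Finset.range n).filter (E s)).card ^ 2 := by
  by_contra! hcon
  set R := Finset.range n with hR
  have hcs : (∑ s ∈ R, (R.filter (E s)).card) ^ 2 ≤ n * ∑ s ∈ R, (R.filter (E s)).card ^ 2 := by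
    have := sq_sum_le_card_mul_sum_sq (s := R) (f := fun s => (R.filter (E s)).card)
    simpa [hR] using this
  have hbad : ∑ s ∈ R, ((R.filter (E s) ×ˢ R.filter (E s)).filter
        (fun p => (pat E n K L s p.1 p.2).card ≤ m)).card ≤ 2 * (2 ^ L * K ^ m) * n ^ 2 := by
    have h1 : ∑ s ∈ R, ((R.filter (E s) ×ˢ R.filter (E s)).filter
        (fun p => (pat E n K L s p.1 p.2).card ≤ m)).card =
        ∑ p ∈ R ×ˢ R, ((comN E n p.1 p.2).filter (fun s => (pat E n K L s p.1 p.2).card ≤ m)).card := by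
      have := Finset.sum_card_bipartiteAbove_eq_sum_card_bipartiteBelow
        (s := R) (t := R ×ˢ R) (fun s p => (E s p.1 ∧ E s p.2) ∧ (pat E n K L s p.1 p.2).card ≤ m)
      unfold Finset.bipartiteAbove Finset.bipartiteBelow at this
      convert this using 3 with s hs p hp
      · ext p
        simp only [Finset.mem_filter, Finset.mem_product]
        tauto
      · ext s
        simp only [Finset.mem_filter, comN]
        tauto
    rw [h1]
    calc _ ≤ ∑ p ∈ R ×ˢ R, (2 ^ L * K ^ m + if p.1 = p.2 then n else 0) :=
          Finset.sum_le_sum (fun p _ => bad_pair E n K L m p.1 p.2 hK hn)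
      _ = n ^ 2 * (2 ^ L * K ^ m) + n ^ 2 := by
          rw [Finset.sum_add_distrib]
          have : ∑ p ∈ R ×ˢ R, (if p.1 = p.2 then n else 0) = n ^ 2 := by
            rw [Finset.sum_product]
            have h9 : ∀ c ∈ R, ∑ y ∈ R, (if c = y then n else 0) = n := by
              intro c hc
              rw [Finset.sum_ite_eq, if_pos hc]
            rw [Finset.sum_congr rfl h9]
            simp [hR, sq]
          rw [this, Finset.sum_const, Finset.card_product, hR, Finset.card_range, smul_eq_mul, sq]
      _ ≤ _ := by
          have : 1 ≤ 2 ^ L * K ^ m := Nat.one_le_iff_ne_zero.2 (by positivity)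
          nlinarith [Nat.zero_le (n^2)]
  have h2 : ∑ s ∈ R, (R.filter (E s)).card ^ 2 ≤ X * (2 * (2 ^ L * K ^ m) * n ^ 2) := by
    calc _ ≤ ∑ s ∈ R, X * ((R.filter (E s) ×ˢ R.filter (E s)).filter
        (fun p => (pat E n K L s p.1 p.2).card ≤ m)).card :=
          Finset.sum_le_sum (fun s hs => hcon s (Finset.mem_range.1 hs))
      _ ≤ _ := by
          rw [← Finset.mul_sum]; exact Nat.mul_le_mul_left _ hbad
  have h3 := hcs.trans (Nat.mul_le_mul_left n h2)
  have : n * (X * (2 * (2 ^ L * K ^ m) * n ^ 2)) = 2 * X * (2 ^ L * K ^ m) * n ^ 3 := by ring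
  omega

open Classical in
lemma find_clique (E : ℕ → ℕ → Prop) (n K L m h t T : ℕ) (hK : 0 < K) (hn : n ≤ K ^ L)
    (hT : T = 2 * h * t) (hh : 0 < h) (ht : 0 < t)
    (hL : 2 * t * (h * 2 ^ T) ≤ L) (hm : L ≤ t * (m + 1))
    (he : 2 * (4 * 2 ^ (L * T)) * (2 ^ L * K ^ m) * n ^ 3 <
      (∑ s ∈ Finset.range n, ((Finset.range n).filter (E s)).card) ^ 2) :
    ∃ s < n, ∃ C B : Finset ℕ, C.card = h ∧ B.card = h ∧ (∀ c ∈ C, c < n ∧ E s c) ∧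
      ∀ c ∈ C, ∀ c' ∈ C, c ≠ c' → ∀ l ∈ B, rb (comN E n c c') K l s := by
  obtain ⟨s, hs, hX⟩ := good_row E n K L m _ hK hn he
  refine ⟨s, hs, ?_⟩
  set U := (Finset.range n).filter (E s) with hU
  let bd : ℕ → Finset ℕ := fun c => U.filter (fun c' => (pat E n K L s c c').card ≤ m)
  have hbsum : ((U ×ˢ U).filter (fun p => (pat E n K L s p.1 p.2).card ≤ m)).card
      = ∑ c ∈ U, (bd c).card := by
    rw [Finset.card_filter, Finset.sum_product]
    apply Finset.sum_congr rfl
    intro c _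
    rw [Finset.card_filter]
  rw [hbsum] at hX
  set Y := 2 * 2 ^ (L * T) with hY
  let U1 := U.filter (fun c => U.card ≤ Y * (bd c).card)
  let U0 := U.filter (fun c => ¬ U.card ≤ Y * (bd c).card)
  have hUU : U1.card + U0.card = U.card := Finset.card_filter_add_card_filter_not _
  have hU1 : 2 * U1.card < U.card := by
    have h1 : U1.card * U.card ≤ Y * ∑ c ∈ U, (bd c).card := by
      calc U1.card * U.card = ∑ c ∈ U1, U.card := by simp
        _ ≤ ∑ c ∈ U1, Y * (bd c).card := Finset.sum_le_sum (fun c hc => (Finset.mem_filter.1 hc).2)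
        _ ≤ ∑ c ∈ U, Y * (bd c).card :=
          Finset.sum_le_sum_of_subset (Finset.filter_subset _ _)
        _ = _ := by rw [Finset.mul_sum]
    have h2 : 4 * 2 ^ (L * T) * ∑ c ∈ U, (bd c).card = 2 * (Y * ∑ c ∈ U, (bd c).card) := by
      rw [hY]; ring
    rw [h2] at hX
    by_contra! hcon
    have : U.card * U.card ≤ 2 * U1.card * U.card := Nat.mul_le_mul_right _ hcon
    nlinarith
  have hU0 : U.card < 2 * U0.card := by omega
  have hU0ne : U0.Nonempty := Finset.card_pos.1 (by omega)
  let χ : ℕ → ℕ → {x // x ∈ (Finset.range L).powerset} := fun c c' =>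
    ⟨pat E n K L s c c', Finset.mem_powerset.2 (pat_subset ..)⟩
  obtain ⟨S, c, a, hS0, hcS, hSS, hSa, hcard⟩ := chain_exists χ U0 hU0ne
  have hΓ : Fintype.card {x // x ∈ (Finset.range L).powerset} = 2 ^ L := by
    rw [Fintype.card_coe, Finset.card_powerset, Finset.card_range]
  rw [hΓ] at hcard
  have hanti : Antitone S := antitone_nat_of_succ_le hSS
  have hcU0 : ∀ i, c i ∈ U0 := fun i => by
    rw [← hS0]; exact hanti (Nat.zero_le i) (hcS i)
  have hpat : ∀ i j, i < j → pat E n K L s (c i) (c j) = (a i).1 := by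
    intro i j hij
    have := hSa i (c j) (hanti (Nat.succ_le_of_lt hij) (hcS j))
    exact congrArg Subtype.val this
  have hbig : ∀ i < T, L ≤ t * (a i).1.card := by
    intro i hi
    by_contra! hcon
    have h1 : (a i).1.card ≤ m := by
      by_contra! h2
      have := Nat.mul_le_mul_left t (show m + 1 ≤ (a i).1.card from h2)
      omega
    have hsub : S (i + 1) ⊆ bd (c i) := by
      intro v hv
      have hv0 : v ∈ U0 := by rw [← hS0]; exact hanti (Nat.zero_le _) hv
      refine Finset.mem_filter.2 ⟨(Finset.mem_filter.1 hv0).1, ?_⟩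
      have := congrArg Subtype.val (hSa i v hv)
      change pat E n K L s (c i) v = (a i).1 at this
      rw [this]; exact h1
    have h3 := Finset.card_le_card hsub
    have h4 := hcard (i + 1)
    have h5 := (Finset.mem_filter.1 (hcU0 i)).2
    have h6 : (2 ^ L) ^ (i + 1) ≤ 2 ^ (L * T) := by
      rw [← pow_mul]
      exact Nat.pow_le_pow_right (by norm_num) (Nat.mul_le_mul_left _ hi)
    have h7 : U0.card ≤ 2 ^ (L * T) * (bd (c i)).card := h4.trans (Nat.mul_le_mul h6 h3)
    apply h5
    rw [hY, mul_assoc]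
    omega
  obtain ⟨D, hD, B, hDc, hBc, hDB⟩ := pigeon h t T L hT hh ht hL (fun i => (a i).1)
    (fun i _ => Finset.mem_powerset.1 (a i).2) hbig
  have hpair : ∀ i ∈ D, ∀ j, i < j → c i ≠ c j ∧ ∀ l ∈ B, rb (comN E n (c i) (c j)) K l s := by
    intro i hi j hij
    have hp := hpat i j hij
    have hB := hDB i hi
    rw [← hp] at hB
    have hne : c i ≠ c j := by
      intro heq
      obtain ⟨l, hl⟩ : B.Nonempty := Finset.card_pos.1 (by omega)
      have := hB hl
      simp [pat, heq] at this
    refine ⟨hne, fun l hl => ?_⟩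
    have := hB hl
    rw [pat, if_neg hne] at this
    exact (Finset.mem_filter.1 this).2
  have hinj : Set.InjOn c D := by
    intro i hi j hj hij
    rcases lt_trichotomy i j with h | h | h
    · exact absurd hij (hpair i hi j h).1
    · exact h
    · exact absurd hij.symm (hpair j hj i h).1
  refine ⟨D.image c, B, by rw [Finset.card_image_of_injOn hinj, hDc], hBc, ?_, ?_⟩
  · intro v hv
    obtain ⟨i, _, rfl⟩ := Finset.mem_image.1 hv
    have := (Finset.mem_filter.1 (hcU0 i)).1
    rw [hU, Finset.mem_filter, Finset.mem_range] at this
    exact this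
  · intro v hv w hw hvw l hl
    obtain ⟨i, hi, rfl⟩ := Finset.mem_image.1 hv
    obtain ⟨j, hj, rfl⟩ := Finset.mem_image.1 hw
    rcases lt_trichotomy i j with h | h | h
    · exact (hpair i hi j h).2 l hl
    · exact absurd (by rw [h]) hvw
    · have := (hpair j hj i h).2 l hl
      rwa [show comN E n (c i) (c j) = comN E n (c j) (c i) by
        unfold comN; ext; simp [and_comm]]

lemma rb_order (K l l' s t t' : ℕ) (hl : l < l')
    (h1 : t / K ^ (l + 1) = s / K ^ (l + 1)) (h2 : s / K ^ l' < t' / K ^ l') : t < t' := by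
  have h3 : t / K ^ l' = s / K ^ l' := by
    obtain ⟨d, rfl⟩ : ∃ d, l' = (l + 1) + d := ⟨l' - (l + 1), by omega⟩
    rw [pow_add, ← Nat.div_div_eq_div_mul, ← Nat.div_div_eq_div_mul, h1]
  by_contra! hcon
  have := Nat.div_le_div_right (c := K ^ l') hcon
  omega

lemma embed_s3 (n h x K s : ℕ) (G : SimpleGraph (Fin n)) (H : SimpleGraph (Fin h))
    (E : ℕ → ℕ → Prop) (hEG : ∀ r c (hr : r < n) (hc : c < n), E r c → G.Adj ⟨r, hr⟩ ⟨c, hc⟩)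
    (hE : ∀ s r c c1, E s c → E s c1 → E r c1 → r < c)
    (hdeg : ∀ u : Fin h, ∃ a b : Fin h, a ≠ b ∧ ∀ v, H.Adj u v → v = a ∨ v = b)
    (hbip : ∀ u v : Fin h, H.Adj u v → u < v → (u : ℕ) < x ∧ x ≤ (v : ℕ))
    (C B : Finset ℕ) (hC : C.card = h) (hB : B.card = h) (hCE : ∀ c ∈ C, c < n ∧ E s c)
    (hCB : ∀ c ∈ C, ∀ c' ∈ C, c ≠ c' → ∀ l ∈ B, rb (comN E n c c') K l s) :
    ordContains G H := by
  choose a b hab hadj using hdeg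
  let cc := C.orderEmbOfFin hC
  let lv := B.orderEmbOfFin hB
  have hcc : ∀ i, cc i ∈ C := fun i => C.orderEmbOfFin_mem hC i
  have hlv : ∀ i, lv i ∈ B := fun i => B.orderEmbOfFin_mem hB i
  have hrow : ∀ u : Fin h, ∃ r, r < n ∧ E r (cc (a u)) ∧ E r (cc (b u)) ∧
      r / K ^ (lv u + 1) = s / K ^ (lv u + 1) ∧ s / K ^ (lv u) < r / K ^ (lv u) := by
    intro u
    obtain ⟨r, hr, h1, h2⟩ := hCB _ (hcc (a u)) _ (hcc (b u))
      (fun hq => hab u (cc.injective hq)) (lv u) (hlv u)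
    simp only [comN, Finset.mem_filter, Finset.mem_range] at hr
    exact ⟨r, hr.1, hr.2.1, hr.2.2, h1, h2⟩
  choose r hrn hra hrb hr1 hr2 using hrow
  let f : Fin h → Fin n := fun u => if (u : ℕ) < x then ⟨r u, hrn u⟩ else ⟨cc u, (hCE _ (hcc u)).1⟩
  have key : ∀ u v : Fin h, H.Adj u v → u < v → G.Adj (f u) (f v) := by
    intro u v huv hlt
    obtain ⟨h1, h2⟩ := hbip u v huv hlt
    have e1 : f u = ⟨r u, hrn u⟩ := if_pos h1
    have e2 : f v = ⟨cc v, (hCE _ (hcc v)).1⟩ := if_neg (by omega)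
    rw [e1, e2]
    apply hEG
    rcases hadj u v huv with rfl | rfl
    · exact hra u
    · exact hrb u
  refine ⟨f, ?_, ?_⟩
  · intro u v huv
    have huv' : (u : ℕ) < v := huv
    rw [Fin.lt_def]
    by_cases hu : (u : ℕ) < x
    · have e1 : f u = ⟨r u, hrn u⟩ := if_pos hu
      by_cases hv : (v : ℕ) < x
      · have e2 : f v = ⟨r v, hrn v⟩ := if_pos hv
        rw [e1, e2]
        exact rb_order K (lv u) (lv v) s _ _ (lv.strictMono huv) (hr1 u) (hr2 v)
      · have e2 : f v = ⟨cc v, (hCE _ (hcc v)).1⟩ := if_neg hv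
        rw [e1, e2]
        exact hE s _ _ (cc (a u)) (hCE _ (hcc v)).2 (hCE _ (hcc _)).2 (hra u)
    · have hv : ¬ (v : ℕ) < x := by omega
      have e1 : f u = ⟨cc u, (hCE _ (hcc u)).1⟩ := if_neg hu
      have e2 : f v = ⟨cc v, (hCE _ (hcc v)).1⟩ := if_neg hv
      rw [e1, e2]
      exact cc.strictMono huv
  · intro u v huv
    rcases lt_trichotomy u v with hlt | heq | hlt
    · exact key u v huv hlt
    · subst heq; exact absurd huv (H.irrefl)
    · exact (key v u huv.symm hlt).symm

def bitE {n : ℕ} (G : SimpleGraph (Fin n)) (j r c : ℕ) : Prop :=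
  ∃ (hr : r < n) (hc : c < n), G.Adj ⟨r, hr⟩ ⟨c, hc⟩ ∧ r < c ∧
    r / 2 ^ (j + 1) = c / 2 ^ (j + 1) ∧ r / 2 ^ j ≠ c / 2 ^ j

lemma bitE_half {n : ℕ} (G : SimpleGraph (Fin n)) (j r c : ℕ) (h : bitE G j r c) :
    r / 2 ^ j / 2 = c / 2 ^ j / 2 ∧ r / 2 ^ j < c / 2 ^ j := by
  obtain ⟨_, _, _, h1, h2, h3⟩ := h
  rw [pow_succ, ← Nat.div_div_eq_div_mul, ← Nat.div_div_eq_div_mul] at h2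
  exact ⟨h2, lt_of_le_of_ne (Nat.div_le_div_right h1.le) h3⟩

lemma bitE_lt {n : ℕ} (G : SimpleGraph (Fin n)) (j s r c c1 : ℕ) (h1 : bitE G j s c)
    (h2 : bitE G j s c1) (h3 : bitE G j r c1) : r < c := by
  have a1 := bitE_half G j _ _ h1
  have a2 := bitE_half G j _ _ h2
  have a3 := bitE_half G j _ _ h3
  by_contra! hcon
  have := Nat.div_le_div_right (c := 2 ^ j) hcon
  omega

lemma bit_exists (J r c : ℕ) (hrc : r < c) (hc : c < 2 ^ J) :
    ∃ j < J, r / 2 ^ (j + 1) = c / 2 ^ (j + 1) ∧ r / 2 ^ j ≠ c / 2 ^ j := by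
  classical
  have hex : ∃ j, r / 2 ^ j = c / 2 ^ j :=
    ⟨J, by rw [Nat.div_eq_of_lt hc, Nat.div_eq_of_lt (hrc.trans hc)]⟩
  have hle : Nat.find hex ≤ J := Nat.find_min' hex
    (by rw [Nat.div_eq_of_lt hc, Nat.div_eq_of_lt (hrc.trans hc)])
  have hspec := Nat.find_spec hex
  have hpos : Nat.find hex ≠ 0 := by
    intro h0
    rw [h0] at hspec
    simp at hspec
    omega
  obtain ⟨j, hj⟩ := Nat.exists_eq_succ_of_ne_zero hpos
  refine ⟨j, by omega, ?_, ?_⟩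
  · rw [hj] at hspec; exact hspec
  · exact Nat.find_min hex (by omega)

open Classical in
lemma edge_count {n : ℕ} (hn : 0 < n) (G : SimpleGraph (Fin n)) (J : ℕ) (hJ : n ≤ 2 ^ J) :
    G.edgeSet.ncard ≤ ∑ j ∈ Finset.range J, ∑ s ∈ Finset.range n,
      ((Finset.range n).filter (bitE G j s)).card := by
  let Q : Finset (ℕ × ℕ × ℕ) := (Finset.range J ×ˢ Finset.range n ×ˢ Finset.range n).filter
    (fun p => bitE G p.1 p.2.1 p.2.2)
  have hQ : Q.card = ∑ j ∈ Finset.range J, ∑ s ∈ Finset.range n,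
      ((Finset.range n).filter (bitE G j s)).card := by
    rw [Finset.card_filter, Finset.sum_product]
    apply Finset.sum_congr rfl
    intro j _
    rw [Finset.sum_product]
    apply Finset.sum_congr rfl
    intro s _
    rw [Finset.card_filter]
  rw [← hQ]
  let g : ℕ × ℕ × ℕ → Sym2 (Fin n) := fun p =>
    if h : p.2.1 < n ∧ p.2.2 < n then s(⟨p.2.1, h.1⟩, ⟨p.2.2, h.2⟩) else s(⟨0, hn⟩, ⟨0, hn⟩)
  have key : ∀ u v : Fin n, G.Adj u v → u < v → s(u, v) ∈ (Q.image g : Finset (Sym2 (Fin n))) := by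
    intro u v huv hlt
    obtain ⟨j, hj, h1, h2⟩ := bit_exists J u v hlt (lt_of_lt_of_le v.2 hJ)
    rw [Finset.mem_image]
    refine ⟨(j, u, v), ?_, ?_⟩
    · simp only [Q, Finset.mem_filter, Finset.mem_product, Finset.mem_range]
      exact ⟨⟨hj, u.2, v.2⟩, u.2, v.2, huv, hlt, h1, h2⟩
    · simp [g]
  have hsub : G.edgeSet ⊆ ((Q.image g : Finset (Sym2 (Fin n))) : Set (Sym2 (Fin n))) := by
    intro e he
    induction e using Sym2.ind with
    | _ u v =>
      rw [SimpleGraph.mem_edgeSet] at he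
      rcases lt_trichotomy u v with h | h | h
      · exact key u v he h
      · subst h; exact absurd he G.irrefl
      · rw [Sym2.eq_swap]; exact key v u he.symm h
  calc G.edgeSet.ncard ≤ ((Q.image g : Finset (Sym2 (Fin n))) : Set (Sym2 (Fin n))).ncard :=
        Set.ncard_le_ncard hsub (Finset.finite_toSet _)
    _ = (Q.image g).card := Set.ncard_coe_finset _
    _ ≤ Q.card := Finset.card_image_le

lemma cycle_deg (k : ℕ) (hk : 2 ≤ k) (H : SimpleGraph (Fin (2 * k)))
    (φ : H ≃g SimpleGraph.cycleGraph (2 * k)) (u : Fin (2 * k)) :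
    ∃ a b : Fin (2 * k), a ≠ b ∧ ∀ v, H.Adj u v → v = a ∨ v = b := by
  have h1 : ∃ a b : Fin (2 * k), ∀ v, H.Adj u v → v = a ∨ v = b := by
    obtain ⟨N, hN⟩ : ∃ N, 2 * k = N + 2 := ⟨2 * k - 2, by omega⟩
    clear hk
    generalize 2 * k = M at *
    subst hN
    refine ⟨φ.symm (φ u - 1), φ.symm (φ u + 1), fun v hv => ?_⟩
    have := φ.map_rel_iff.2 hv
    rw [SimpleGraph.cycleGraph_adj] at this
    rcases this with h | h
    · left
      rw [RelIso.eq_symm_apply, ← h]; abel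
    · right
      rw [RelIso.eq_symm_apply, ← h]; abel
  obtain ⟨a, b, hab⟩ := h1
  by_cases h : a = b
  · have : Nontrivial (Fin (2 * k)) := Fin.nontrivial_iff_two_le.2 (by omega)
    obtain ⟨b', hb'⟩ := exists_ne a
    exact ⟨a, b', hb'.symm, fun v hv => Or.inl (by rcases hab v hv with h1 | h1 <;> simp [h1, h])⟩
  · exact ⟨a, b, h, hab⟩

lemma nat_bound (n h x κ t T L m : ℕ) (hn : 0 < n) (G : SimpleGraph (Fin n))
    (H : SimpleGraph (Fin h)) (hG : ¬ ordContains G H)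
    (hdeg : ∀ u : Fin h, ∃ a b : Fin h, a ≠ b ∧ ∀ v, H.Adj u v → v = a ∨ v = b)
    (hbip : ∀ u v : Fin h, H.Adj u v → u < v → (u : ℕ) < x ∧ x ≤ (v : ℕ))
    (hnL : n ≤ (2 ^ κ) ^ L)
    (hT : T = 2 * h * t) (hh : 0 < h) (ht : 0 < t)
    (hL : 2 * t * (h * 2 ^ T) ≤ L) (hm : L ≤ t * (m + 1)) :
    G.edgeSet.ncard ^ 2 ≤ 8 * κ ^ 2 * 2 ^ (L * (T + 3)) * (2 ^ κ) ^ m * n ^ 3 := by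
  classical
  set Z := 2 * (4 * 2 ^ (L * T)) * (2 ^ L * (2 ^ κ) ^ m) * n ^ 3 with hZ
  have hj : ∀ j, (∑ s ∈ Finset.range n, ((Finset.range n).filter (bitE G j s)).card) ^ 2 ≤ Z := by
    intro j
    by_contra! hcon
    obtain ⟨s, _, C, B, hC, hB, hCE, hCB⟩ := find_clique (bitE G j) n (2 ^ κ) L m h t T
      (by positivity) hnL hT hh ht hL hm hcon
    exact hG (embed_s3 n h x (2 ^ κ) s G H (bitE G j) (fun r c hr hc hE => by
      obtain ⟨_, _, h1, _⟩ := hE; exact h1) (fun s r c c1 => bitE_lt G j s r c c1)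
      hdeg hbip C B hC hB hCE hCB)
  have he := edge_count hn G (κ * L) (by rw [pow_mul]; exact hnL)
  have h1 := Nat.pow_le_pow_left he 2
  have h2 := sq_sum_le_card_mul_sum_sq (s := Finset.range (κ * L))
    (f := fun j => ∑ s ∈ Finset.range n, ((Finset.range n).filter (bitE G j s)).card)
  have h3 : ∑ j ∈ Finset.range (κ * L),
      (∑ s ∈ Finset.range n, ((Finset.range n).filter (bitE G j s)).card) ^ 2 ≤ κ * L * Z := by
    calc _ ≤ ∑ j ∈ Finset.range (κ * L), Z := Finset.sum_le_sum (fun j _ => hj j)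
      _ = _ := by simp
  rw [Finset.card_range] at h2
  have h4 := h1.trans (h2.trans (Nat.mul_le_mul_left _ h3))
  have hL2 : L ≤ 2 ^ L := Nat.lt_two_pow_self.le
  calc _ ≤ κ * L * (κ * L * Z) := h4
    _ = L * L * (κ ^ 2 * Z) := by ring
    _ ≤ 2 ^ L * 2 ^ L * (κ ^ 2 * Z) := Nat.mul_le_mul_right _ (Nat.mul_le_mul hL2 hL2)
    _ = _ := by rw [hZ]; ring

/-- Let `k ≥ 2` and let `H` be an ordered graph on `2k` vertices whose underlying graph is a
cycle of length `2k` and whose interval chromatic number is `2` (witnessed by a split point `x`: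
all edges go between `{v : v < x}` and `{v : x ≤ v}`). Then `ex_<(n, H) ≤ C · n^(3/2 + ε)`. -/
theorem statement3 (k : ℕ) (hk : 2 ≤ k) (ε : ℝ) (hε : 0 < ε)
    (H : SimpleGraph (Fin (2 * k)))
    (hcyc : Nonempty (H ≃g SimpleGraph.cycleGraph (2 * k)))
    (x : ℕ) (hx : x ≤ 2 * k)
    (hbip : ∀ u v : Fin (2 * k), H.Adj u v → u < v → (u : ℕ) < x ∧ x ≤ (v : ℕ)) :
    ∃ C : ℝ, 0 < C ∧ ∀ n : ℕ, 0 < n →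
      (ordEx n H : ℝ) ≤ C * (n : ℝ) ^ ((3 : ℝ) / 2 + ε) := by

  obtain ⟨φ⟩ := hcyc
  obtain ⟨t, ht⟩ := exists_nat_ge (1 / ε)
  have htpos : 0 < t := by
    have : (0:ℝ) < t := lt_of_lt_of_le (by positivity) ht
    exact_mod_cast this
  set T := 2 * (2 * k) * t with hT
  obtain ⟨κ, hκ⟩ := exists_nat_ge (((T:ℝ) + 3) / ε)
  have hκpos : 0 < κ := by
    have : (0:ℝ) < κ := lt_of_lt_of_le (by positivity) hκ
    exact_mod_cast this
  set L0 := 2 * t * (2 * k * 2 ^ T) with hL0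
  have hκr : (0:ℝ) < κ := by exact_mod_cast hκpos
  have htr : (0:ℝ) < t := by exact_mod_cast htpos
  set W : ℝ := ((2:ℝ) ^ κ) ^ (L0 + 1) with hW
  have hWpos : 0 < W := by positivity
  set C2 : ℝ := 8 * (κ:ℝ) ^ 2 * W ^ (2 * ε) with hC2
  have hC2pos : 0 < C2 := by positivity
  refine ⟨Real.sqrt C2, Real.sqrt_pos.2 hC2pos, ?_⟩
  intro n hn
  have hnr : (0:ℝ) < n := by exact_mod_cast hn
  have hRpos : 0 ≤ Real.sqrt C2 * (n:ℝ) ^ ((3:ℝ)/2 + ε) := by positivity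
  have main : ∀ G : SimpleGraph (Fin n), ¬ ordContains G H →
      (G.edgeSet.ncard : ℝ) ≤ Real.sqrt C2 * (n:ℝ) ^ ((3:ℝ)/2 + ε) := by
    intro G hG
    set l1 := Nat.log (2 ^ κ) n with hl1
    set L := l1 + 1 + L0 with hL
    have hK1 : 1 < 2 ^ κ := Nat.one_lt_two_pow (by omega)
    have hnL : n ≤ (2 ^ κ) ^ L := by
      have h1 := Nat.lt_pow_succ_log_self hK1 n
      have h2 : (2 ^ κ) ^ (l1 + 1) ≤ (2 ^ κ) ^ L := Nat.pow_le_pow_right (by omega) (by omega)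
      exact h1.le.trans h2
    have hb := nat_bound n (2 * k) x κ t T L (L / t) hn G H hG (cycle_deg k hk H φ) hbip hnL hT
      (by omega) htpos (by omega) (Nat.lt_mul_div_succ L htpos).le
    have hbr : (G.edgeSet.ncard : ℝ) ^ 2 ≤
        8 * (κ:ℝ) ^ 2 * 2 ^ (L * (T + 3)) * (2 ^ κ) ^ (L / t) * n ^ 3 := by exact_mod_cast hb
    set Q : ℝ := ((2:ℝ) ^ κ) ^ L with hQ
    have hQ1 : 1 ≤ Q := one_le_pow₀ (one_le_pow₀ (by norm_num))
    have hQW : Q ≤ W * n := by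
      have h1 : ((2 ^ κ) ^ l1 : ℕ) ≤ n := Nat.pow_log_le_self _ (by omega)
      have h2 : ((2:ℝ) ^ κ) ^ l1 ≤ n := by exact_mod_cast h1
      have h3 : Q = W * ((2:ℝ) ^ κ) ^ l1 := by
        rw [hQ, hW, ← pow_add]; congr 1; omega
      rw [h3]
      exact mul_le_mul_of_nonneg_left h2 hWpos.le
    have hQ2 : Q = (2:ℝ) ^ ((κ:ℝ) * L) := by
      rw [hQ, ← pow_mul, ← Real.rpow_natCast]; push_cast; rfl
    have e1 : (2:ℝ) ^ (L * (T + 3)) ≤ Q ^ ε := by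
      rw [hQ2, ← Real.rpow_mul (by norm_num), ← Real.rpow_natCast]
      apply Real.rpow_le_rpow_of_exponent_le (by norm_num)
      push_cast
      rw [div_le_iff₀ hε] at hκ
      have : (0:ℝ) ≤ L := by positivity
      nlinarith
    have e2 : ((2:ℝ) ^ κ) ^ (L / t) ≤ Q ^ ε := by
      rw [hQ2, ← Real.rpow_mul (by norm_num), ← pow_mul, ← Real.rpow_natCast]
      apply Real.rpow_le_rpow_of_exponent_le (by norm_num)
      push_cast
      have h1 : ((L / t : ℕ) : ℝ) ≤ L / t := Nat.cast_div_le
      have h2 : (L:ℝ) / t ≤ L * ε := by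
        rw [div_le_iff₀ hε] at ht
        rw [div_le_iff₀ htr]
        have : (0:ℝ) ≤ L := by positivity
        nlinarith
      rw [mul_assoc]
      exact mul_le_mul_of_nonneg_left (h1.trans h2) hκr.le
    have e3 : Q ^ ε * Q ^ ε ≤ W ^ (2 * ε) * (n:ℝ) ^ (2 * ε) := by
      rw [← Real.rpow_add (by linarith), ← Real.mul_rpow hWpos.le hnr.le, two_mul]
      exact Real.rpow_le_rpow (by linarith) hQW (by linarith)
    have hfin : (G.edgeSet.ncard : ℝ) ^ 2 ≤ (Real.sqrt C2 * (n:ℝ) ^ ((3:ℝ)/2 + ε)) ^ 2 := by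
      rw [mul_pow, Real.sq_sqrt hC2pos.le, ← Real.rpow_natCast ((n:ℝ) ^ _), ← Real.rpow_mul hnr.le]
      have h5 : (n:ℝ) ^ (((3:ℝ)/2 + ε) * (2:ℕ)) = (n:ℝ) ^ (2 * ε) * n ^ 3 := by
        rw [← Real.rpow_natCast (n:ℝ) 3, ← Real.rpow_add hnr]
        congr 1; push_cast; ring
      rw [h5]
      calc _ ≤ _ := hbr
        _ = 8 * (κ:ℝ) ^ 2 * n ^ 3 * (2 ^ (L * (T + 3)) * (2 ^ κ) ^ (L / t)) := by ring
        _ ≤ 8 * (κ:ℝ) ^ 2 * n ^ 3 * (Q ^ ε * Q ^ ε) := by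
            apply mul_le_mul_of_nonneg_left _ (by positivity)
            exact mul_le_mul e1 e2 (by positivity) (by positivity)
        _ ≤ 8 * (κ:ℝ) ^ 2 * n ^ 3 * (W ^ (2 * ε) * (n:ℝ) ^ (2 * ε)) :=
            mul_le_mul_of_nonneg_left e3 (by positivity)
        _ = _ := by rw [hC2]; ring
    exact (pow_le_pow_iff_left₀ (by positivity) hRpos (by norm_num)).1 hfin
  have hle : ordEx n H ≤ ⌊Real.sqrt C2 * (n:ℝ) ^ ((3:ℝ)/2 + ε)⌋₊ := by
    apply csSup_le'
    rintro e ⟨G, hG, rfl⟩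
    exact Nat.le_floor (main G hG)
  exact (Nat.cast_le.2 hle).trans (Nat.floor_le hRpos)
end

section
/- Let k and m be non-negative integers with k ≥ 1, and let T be a finite rooted tree in which every vertex has at most k children. Call a vertex of T branching if it has at least 2 children. Then the number of non-root leaves of T having at most m branching ancestors is at most k^m. -/
/-- In a rooted tree given by a parent function, the children of `v` are the non-root vertices
whose parent is `v`. -/
def children {V : Type*} (root : V) (parent : V → V) (v : V) : Set V :=
  {u : V | u ≠ root ∧ parent u = v}

/-- A vertex is branching if it has at least two children. -/
def Branching {V : Type*} (root : V) (parent : V → V) (v : V) : Prop :=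
  2 ≤ (children root parent v).ncard

/-- A vertex is a leaf if it has no children. -/
def IsLeaf {V : Type*} (root : V) (parent : V → V) (v : V) : Prop :=
  children root parent v = ∅

/-- The ancestors of `v` are the vertices other than `v` obtained by iterating the parent map. -/
def ancestors {V : Type*} (parent : V → V) (v : V) : Set V :=
  {u : V | u ≠ v ∧ ∃ n : ℕ, parent^[n] v = u}

section Helpers
variable {V : Type*} {root : V} {parent : V → V}

lemma aux_root (hroot : parent root = root) (n : ℕ) : parent^[n] root = root :=
  Function.iterate_fixed hroot n

lemma aux_acyclic (hroot : parent root = root)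
    (hreach : ∀ v : V, ∃ n : ℕ, parent^[n] v = root) (u : V) (n : ℕ)
    (h : parent^[n+1] u = u) : u = root := by
  obtain ⟨N, hN⟩ := hreach u
  have h1 : parent^[(n+1) * N] u = u := by
    rw [Function.iterate_mul]
    exact Function.iterate_fixed h N
  have h2 : parent^[(n+1) * N] u = root := by
    have : (n+1) * N = n * N + N := by ring
    rw [this, Function.iterate_add_apply, hN, aux_root hroot]
  exact h1.symm.trans h2

/-- Number of branching ancestors. -/
noncomputable def bcount (root : V) (parent : V → V) (v : V) : ℕ :=
  (ancestors parent v ∩ {u : V | Branching root parent u}).ncard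

/-- Descendants. -/
def desc (parent : V → V) (v : V) : Set V := {w | ∃ n : ℕ, parent^[n] w = v}

lemma aux_anc (hroot : parent root = root)
    (hreach : ∀ v : V, ∃ n : ℕ, parent^[n] v = root) (u : V) (hu : u ≠ root) :
    ancestors parent u = insert (parent u) (ancestors parent (parent u)) := by
  ext w
  simp only [ancestors, Set.mem_insert_iff, Set.mem_ofPred_eq]
  constructor
  · rintro ⟨h, n, hn⟩
    rcases n with _ | n
    · exact absurd hn.symm h
    · by_cases hw : w = parent u
      · exact Or.inl hw
      · exact Or.inr ⟨hw, n, hn⟩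
  · rintro (h | ⟨h, n, hn⟩)
    · subst h
      exact ⟨fun h => hu (aux_acyclic hroot hreach u 0 h), 1, rfl⟩
    · refine ⟨?_, n+1, hn⟩
      rintro rfl
      exact hu (aux_acyclic hroot hreach w n hn)

lemma aux_b_branch [Finite V] (hroot : parent root = root)
    (hreach : ∀ v : V, ∃ n : ℕ, parent^[n] v = root) (u : V) (hu : u ≠ root)
    (hb : Branching root parent (parent u)) :
    bcount root parent u = bcount root parent (parent u) + 1 := by
  unfold bcount
  rw [aux_anc hroot hreach u hu, Set.insert_inter_of_mem (show parent u ∈ {u : V | Branching root parent u} from hb), Set.ncard_insert_of_notMem]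
  rintro ⟨⟨h, _⟩, _⟩
  exact h rfl

lemma aux_b_nbranch (hroot : parent root = root)
    (hreach : ∀ v : V, ∃ n : ℕ, parent^[n] v = root) (u : V) (hu : u ≠ root)
    (hb : ¬ Branching root parent (parent u)) :
    bcount root parent u = bcount root parent (parent u) := by
  unfold bcount
  rw [aux_anc hroot hreach u hu, Set.insert_inter_of_notMem (show parent u ∉ {u : V | Branching root parent u} from hb)]

lemma aux_b_mono [Finite V] (hroot : parent root = root)
    (hreach : ∀ v : V, ∃ n : ℕ, parent^[n] v = root) (n : ℕ) (w : V) :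
    bcount root parent (parent^[n] w) ≤ bcount root parent w := by
  induction n generalizing w with
  | zero => exact le_rfl
  | succ n ih =>
    refine (ih (parent w)).trans ?_
    by_cases hw : w = root
    · rw [hw, hroot]
    · by_cases hb : Branching root parent (parent w)
      · rw [aux_b_branch hroot hreach w hw hb]; omega
      · rw [aux_b_nbranch hroot hreach w hw hb]

lemma aux_desc_lt [Finite V] (hroot : parent root = root)
    (hreach : ∀ v : V, ∃ n : ℕ, parent^[n] v = root) (u : V) (hu : u ≠ root) :
    (desc parent u).ncard < (desc parent (parent u)).ncard := by
  apply Set.ncard_lt_ncard _ (Set.toFinite _)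
  rw [Set.ssubset_iff_of_subset]
  · refine ⟨parent u, ⟨0, rfl⟩, ?_⟩
    rintro ⟨n, hn⟩
    exact hu (aux_acyclic hroot hreach u n hn)
  · rintro w ⟨n, hn⟩
    exact ⟨n+1, by rw [Function.iterate_succ_apply', hn]⟩

/-- Leaves below a vertex with bounded relative branching. -/
def goodLeaves (root : V) (parent : V → V) (v : V) (m : ℕ) : Set V :=
  {w | w ∈ desc parent v ∧ IsLeaf root parent w ∧
    bcount root parent w ≤ bcount root parent v + m}

lemma aux_main_s4 [Finite V] (k : ℕ) (hk : 1 ≤ k) (hroot : parent root = root)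
    (hreach : ∀ v : V, ∃ n : ℕ, parent^[n] v = root)
    (hdeg : ∀ v : V, (children root parent v).ncard ≤ k) (N : ℕ) :
    ∀ (v : V) (m : ℕ), (desc parent v).ncard ≤ N →
      (goodLeaves root parent v m).ncard ≤ k ^ m := by
  induction N with
  | zero =>
    intro v m h
    have : 0 < (desc parent v).ncard := (Set.ncard_pos (Set.toFinite _)).2 ⟨v, 0, rfl⟩
    omega
  | succ N ih =>
    intro v m h
    -- every descendant is v or below a child
    have key : ∀ n w, parent^[n] w = v → w = v ∨ ∃ u ∈ children root parent v,
        w ∈ desc parent u := by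
      intro n
      induction n with
      | zero => intro w hw; exact Or.inl hw
      | succ n ihn =>
        intro w hw
        by_cases hr : parent^[n] w = root
        · refine ihn w ?_
          rw [Function.iterate_succ_apply', hr, hroot] at hw
          rw [hr, hw]
        · exact Or.inr ⟨parent^[n] w, ⟨hr, by rw [← hw, Function.iterate_succ_apply']⟩, n, rfl⟩
    by_cases hleaf : IsLeaf root parent v
    · have hs : goodLeaves root parent v m ⊆ {v} := by
        rintro w ⟨⟨n, hn⟩, -, -⟩
        rcases key n w hn with h | ⟨u, hu, -⟩
        · exact h
        · rw [hleaf] at hu; exact hu.elim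
      calc _ ≤ ({v} : Set V).ncard := Set.ncard_le_ncard hs
        _ = 1 := Set.ncard_singleton v
        _ ≤ k ^ m := Nat.one_le_pow _ _ hk
    -- bound through children
    have gen : ∀ m', (∀ u ∈ children root parent v,
        bcount root parent v + m = bcount root parent u + m') →
        (goodLeaves root parent v m).ncard ≤ (children root parent v).ncard * k ^ m' := by
      intro m' hm'
      have hfin : (children root parent v).Finite := Set.toFinite _
      have hs : goodLeaves root parent v m ⊆
          ⋃ u ∈ hfin.toFinset, goodLeaves root parent u m' := by
        rintro w ⟨⟨n, hn⟩, hl, hb⟩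
        rcases key n w hn with h | ⟨u, hu, hw⟩
        · subst h; exact absurd hl hleaf
        · simp only [Set.mem_iUnion]
          exact ⟨u, hfin.mem_toFinset.2 hu, hw, hl, by rw [← hm' u hu]; exact hb⟩
      refine (Set.ncard_le_ncard hs).trans ((Finset.set_ncard_biUnion_le _ _).trans ?_)
      rw [Set.ncard_eq_toFinset_card _ hfin, ← smul_eq_mul]
      apply Finset.sum_le_card_nsmul
      intro u hu
      have hu' : u ∈ children root parent v := hfin.mem_toFinset.1 hu
      have := aux_desc_lt hroot hreach u hu'.1
      rw [hu'.2] at this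
      exact ih u m' (by omega)
    by_cases hb : Branching root parent v
    · have hbu : ∀ u ∈ children root parent v,
          bcount root parent u = bcount root parent v + 1 := by
        rintro u ⟨hu, rfl⟩
        exact aux_b_branch hroot hreach u hu hb
      rcases m with _ | m
      · have : goodLeaves root parent v 0 = ∅ := by
          rw [Set.eq_empty_iff_forall_notMem]
          rintro w ⟨⟨n, hn⟩, hl, hbw⟩
          rcases key n w hn with h | ⟨u, hu, j, hj⟩
          · subst h; exact hleaf hl
          · have h1 := aux_b_mono hroot hreach j w
            rw [hj, hbu u hu] at h1
            omega
        rw [this]; simp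
      · refine (gen m (fun u hu => by rw [hbu u hu]; ring)).trans ?_
        rw [pow_succ']
        exact Nat.mul_le_mul_right _ (hdeg v)
    · refine (gen m ?_).trans ?_
      · rintro u ⟨hu, rfl⟩
        rw [aux_b_nbranch hroot hreach u hu hb]
      · unfold Branching at hb
        calc _ ≤ 1 * k ^ m := Nat.mul_le_mul_right _ (by omega)
          _ = k ^ m := one_mul _

end Helpers

/-- Let `k ≥ 1` and `m ≥ 0`, and let `T` be a finite rooted tree (encoded by a root and a
parent function, where the root is its own parent and every vertex reaches the root by
iterating the parent map) in which every vertex has at most `k` children. Then the number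
of non-root leaves of `T` with at most `m` branching ancestors is at most `k^m`. -/
theorem statement4 (k m : ℕ) (hk : 1 ≤ k) (V : Type*) [Fintype V]
    (root : V) (parent : V → V)
    (hroot : parent root = root)
    (hreach : ∀ v : V, ∃ n : ℕ, parent^[n] v = root)
    (hdeg : ∀ v : V, (children root parent v).ncard ≤ k) :
    {v : V | v ≠ root ∧ IsLeaf root parent v ∧
      (ancestors parent v ∩ {u : V | Branching root parent u}).ncard ≤ m}.ncard ≤ k ^ m := by
  refine le_trans (Set.ncard_le_ncard ?_)
    (aux_main_s4 k hk hroot hreach hdeg _ root m le_rfl)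
  rintro v ⟨-, hl, hb⟩
  exact ⟨hreach v, hl, hb.trans (Nat.le_add_left _ _)⟩
end

section
/- Let k, s ≥ 1 and m ≥ 0 be integers, and let S be a set of sequences of length s with entries in {0, 1, …, k−1}. For a sequence x ∈ S and an index 0 ≤ j < s, say that the length-j prefix of x is branching (with respect to S) if there exist two sequences in S that both agree with x in their first j entries but differ from each other in their (j+1)-st entry. Then the number of sequences x ∈ S that have at most m branching prefixes is at most k^m. -/
open Classical in
/-- Let `k, s ≥ 1`, `m ≥ 0`, and let `S` be a set of sequences of length `s` with entries in
`{0, …, k-1}` (functions `Fin s → Fin k`). Say the length-`j` prefix (`0 ≤ j < s`) of `x ∈ S`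
is branching if there are two sequences in `S` agreeing with `x` in their first `j` entries but
differing from each other in their `(j+1)`-st entry. Then the number of `x ∈ S` with at most
`m` branching prefixes is at most `k^m`. -/
theorem statement5 (k s m : ℕ) (hk : 1 ≤ k) (hs : 1 ≤ s) (S : Finset (Fin s → Fin k)) :
    (S.filter fun x : Fin s → Fin k =>
        (Finset.univ.filter fun j : Fin s =>
          ∃ y ∈ S, ∃ z ∈ S,
            (∀ i : Fin s, (i : ℕ) < (j : ℕ) → y i = x i) ∧
            (∀ i : Fin s, (i : ℕ) < (j : ℕ) → z i = x i) ∧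
            y j ≠ z j).card ≤ m).card ≤ k ^ m := by
  let B : (Fin s → Fin k) → Fin s → Prop := fun x j => ∃ y ∈ S, ∃ z ∈ S,
            (∀ i : Fin s, (i : ℕ) < (j : ℕ) → y i = x i) ∧
            (∀ i : Fin s, (i : ℕ) < (j : ℕ) → z i = x i) ∧
            y j ≠ z j
  let c : (Fin s → Fin k) → Fin s → ℕ := fun x j =>
    (Finset.univ.filter fun i : Fin s => i < j ∧ B x i).card
  have hcmono : ∀ x j j', B x j → j < j' → c x j < c x j' := by
    intro x j j' hB hj
    apply Finset.card_lt_card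
    rw [Finset.ssubset_iff_of_subset]
    · exact ⟨j, by simp [hB, hj], by simp⟩
    · intro i hi
      simp only [Finset.mem_filter, Finset.mem_univ, true_and] at hi ⊢
      exact ⟨hi.1.trans hj, hi.2⟩
  have hclt : ∀ x j, B x j → c x j < (Finset.univ.filter fun i : Fin s => B x i).card := by
    intro x j hB
    apply Finset.card_lt_card
    rw [Finset.ssubset_iff_of_subset]
    · exact ⟨j, by simp [hB], by simp⟩
    · intro i hi
      simp only [Finset.mem_filter, Finset.mem_univ, true_and] at hi ⊢
      exact hi.2
  let f : (Fin s → Fin k) → Fin m → Fin k := fun x r =>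
    if h : ∃ j, B x j ∧ c x j = r then x h.choose else ⟨0, hk⟩
  have hf : ∀ x j (r : Fin m), B x j → c x j = r → f x r = x j := by
    intro x j r hB hc
    have h : ∃ j, B x j ∧ c x j = r := ⟨j, hB, hc⟩
    have h1 : f x r = x h.choose := dif_pos h
    obtain ⟨h2, h3⟩ := h.choose_spec
    rw [h1]
    congr 1
    rcases lt_trichotomy h.choose j with h4 | h4 | h4
    · have := hcmono x _ _ h2 h4
      omega
    · exact h4
    · have := hcmono x _ _ hB h4
      omega
  change (S.filter fun x => (Finset.univ.filter fun j : Fin s => B x j).card ≤ m).card ≤ k ^ m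
  have key : (S.filter fun x => (Finset.univ.filter fun j : Fin s => B x j).card ≤ m).card
      ≤ (Finset.univ : Finset (Fin m → Fin k)).card := by
    apply Finset.card_le_card_of_injOn f (fun _ _ => Finset.mem_coe.2 (Finset.mem_univ _))
    intro x hx y hy hxy
    have hx' := Finset.mem_filter.1 (Finset.mem_coe.1 hx)
    have hy' := Finset.mem_filter.1 (Finset.mem_coe.1 hy)
    by_contra hne
    obtain ⟨j0, hj0⟩ := Function.ne_iff.1 hne
    obtain ⟨j, hj, hmin⟩ := WellFounded.has_min (wellFounded_lt (α := Fin s))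
      {j | x j ≠ y j} ⟨j0, hj0⟩
    have hag : ∀ i, i < j → x i = y i := by
      intro i hi
      by_contra hh
      exact hmin i hh hi
    have hBx : B x j := ⟨x, hx'.1, y, hy'.1, fun _ _ => rfl, fun i hi => (hag i hi).symm, hj⟩
    have hBy : B y j := ⟨x, hx'.1, y, hy'.1, fun i hi => hag i hi, fun _ _ => rfl, hj⟩
    have hBB : ∀ i, i < j → (B x i ↔ B y i) := by
      intro i hi
      constructor
      · rintro ⟨u, hu, v, hv, h1, h2, h3⟩
        exact ⟨u, hu, v, hv, fun l hl => (h1 l hl).trans (hag l (lt_trans hl hi)),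
          fun l hl => (h2 l hl).trans (hag l (lt_trans hl hi)), h3⟩
      · rintro ⟨u, hu, v, hv, h1, h2, h3⟩
        exact ⟨u, hu, v, hv, fun l hl => (h1 l hl).trans (hag l (lt_trans hl hi)).symm,
          fun l hl => (h2 l hl).trans (hag l (lt_trans hl hi)).symm, h3⟩
    have hcc : c x j = c y j := by
      apply congrArg Finset.card
      apply Finset.filter_congr
      intro i _
      exact and_congr_right (hBB i)
    have hlt : c x j < m := lt_of_lt_of_le (hclt x j hBx) hx'.2
    have e1 := hf x j ⟨c x j, hlt⟩ hBx rfl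
    have e2 := hf y j ⟨c x j, hlt⟩ hBy hcc.symm
    apply hj
    rw [← e1, ← e2, hxy]
  simpa using key
end

section
/- Let r, t ≥ 1 be integers and let A_{r,t} be the r×t all-one zero-one matrix. Then there is a constant C (depending on r and t) such that for every positive integer n, ex(n, A_{r,t}) ≤ C · n^{2 − 1/t}. -/
open Finset in
theorem aux_weight (r t n : ℕ) (M : Fin n → Fin n → Bool)
    (hM : ¬ matContains M (fun (_ : Fin r) (_ : Fin t) => true)) :
    ∑ i : Fin n, ((univ.filter fun j => M i j = true).card.choose t) ≤ r * n.choose t := by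
  classical
  set N : Fin n → Finset (Fin n) := fun i => univ.filter fun j => M i j = true with hN
  have h := sum_card_bipartiteAbove_eq_sum_card_bipartiteBelow
    (s := (univ : Finset (Fin n))) (t := powersetCard t (univ : Finset (Fin n)))
    (fun i T => T ⊆ N i)
  have h1 : ∀ i, ((powersetCard t (univ : Finset (Fin n))).bipartiteAbove
      (fun i T => T ⊆ N i) i).card = (N i).card.choose t := by
    intro i
    rw [← card_powersetCard]
    congr 1
    ext T
    simp only [mem_bipartiteAbove, mem_powersetCard, subset_univ, true_and]
    tauto
  have h2 : ∀ T ∈ powersetCard t (univ : Finset (Fin n)),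
      ((univ : Finset (Fin n)).bipartiteBelow (fun i T => T ⊆ N i) T).card ≤ r := by
    intro T hT
    by_contra! hc
    apply hM
    obtain ⟨R, hR, hRc⟩ := exists_subset_card_eq hc.le
    have hTc := (mem_powersetCard.1 hT).2
    refine ⟨R.orderEmbOfFin hRc, T.orderEmbOfFin hTc, (R.orderEmbOfFin hRc).strictMono,
      (T.orderEmbOfFin hTc).strictMono, fun i j _ => ?_⟩
    have hi := hR (R.orderEmbOfFin_mem hRc i)
    have hj := (mem_bipartiteBelow _).1 hi |>.2 (T.orderEmbOfFin_mem hTc j)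
    simpa [hN] using hj
  simp only [h1] at h
  rw [h]
  refine (sum_le_card_nsmul _ _ r h2).trans ?_
  simp [mul_comm]

open Finset in
theorem aux_main_s7 (r t n : ℕ) (hr : 1 ≤ r) (ht : 1 ≤ t) (hn : 0 < n) (M : Fin n → Fin n → Bool)
    (hM : ¬ matContains M (fun (_ : Fin r) (_ : Fin t) => true)) :
    (matWeight M : ℝ) ≤ (r + t : ℝ) * (n : ℝ) ^ (2 - 1 / (t : ℝ)) := by
  have h := aux_weight r t n M hM
  set d : Fin n → ℕ := fun i => (univ.filter fun j => M i j = true).card with hd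
  have hw : matWeight M = ∑ i, d i := by
    simp only [matWeight, hd, card_filter, Fintype.sum_prod_type]
  have h1 : ∑ i, (d i + 1 - t) ^ t ≤ r * n ^ t := by
    calc ∑ i, (d i + 1 - t) ^ t ≤ ∑ i, t.factorial * (d i).choose t := by
          refine sum_le_sum fun i _ => ?_
          rw [← Nat.descFactorial_eq_factorial_mul_choose]
          exact Nat.pow_sub_le_descFactorial _ _
      _ = t.factorial * ∑ i, (d i).choose t := by rw [mul_sum]
      _ ≤ t.factorial * (r * n.choose t) := Nat.mul_le_mul_left _ h
      _ = r * n.descFactorial t := by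
          rw [Nat.descFactorial_eq_factorial_mul_choose]; ring
      _ ≤ r * n ^ t := Nat.mul_le_mul_left _ (Nat.descFactorial_le_pow _ _)
  set S : ℕ := ∑ i, (d i + 1 - t) with hS
  have hnR : (1 : ℝ) ≤ n := by exact_mod_cast hn
  have hrR : (1 : ℝ) ≤ r := by exact_mod_cast hr
  have htR : (1 : ℝ) ≤ t := by exact_mod_cast ht
  have h2 : (S : ℝ) ^ t ≤ r * (n : ℝ) ^ (2 * t - 1) := by
    obtain ⟨k, rfl⟩ : ∃ k, t = k + 1 := ⟨t - 1, by omega⟩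
    have hp := pow_sum_div_card_le_sum_pow (s := (univ : Finset (Fin n)))
      (f := fun i => ((d i + 1 - (k + 1) : ℕ) : ℝ)) (fun i _ => Nat.cast_nonneg _) k
    rw [div_le_iff₀ (by simp; positivity)] at hp
    have h1R : ∑ i, ((d i + 1 - (k + 1) : ℕ) : ℝ) ^ (k + 1) ≤ r * (n : ℝ) ^ (k + 1) := by
      exact_mod_cast h1
    calc (S : ℝ) ^ (k + 1) = (∑ i, ((d i + 1 - (k + 1) : ℕ) : ℝ)) ^ (k + 1) := by
          rw [hS]; push_cast; rfl
      _ ≤ _ := hp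
      _ ≤ (r * (n : ℝ) ^ (k + 1)) * (n : ℝ) ^ k := by
          rw [card_univ, Fintype.card_fin]; gcongr
      _ = r * (n : ℝ) ^ (2 * (k + 1) - 1) := by
          rw [show 2 * (k + 1) - 1 = (k + 1) + k by omega, pow_add]; ring
  have h3 : (S : ℝ) ≤ r * (n : ℝ) ^ (2 - 1 / (t : ℝ)) := by
    refine le_of_pow_le_pow_left₀ (n := t) (by omega) (by positivity) (h2.trans ?_)
    have e : ((n : ℝ) ^ (2 - 1 / (t : ℝ))) ^ t = (n : ℝ) ^ (2 * t - 1) := by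
      rw [← Real.rpow_mul_natCast (by positivity), ← Real.rpow_natCast]
      congr 1
      rw [Nat.cast_sub (by omega)]
      push_cast
      field_simp
    rw [mul_pow, e]
    gcongr
    exact le_self_pow₀ hrR (by omega)
  have h4 : (n : ℝ) ≤ (n : ℝ) ^ (2 - 1 / (t : ℝ)) := by
    refine Real.self_le_rpow_of_one_le hnR ?_
    have : 1 / (t : ℝ) ≤ 1 := by rw [div_le_one (by linarith)]; exact htR
    linarith
  have h5 : ∑ i, d i ≤ S + t * n := by
    calc ∑ i, d i ≤ ∑ i, ((d i + 1 - t) + t) := sum_le_sum fun i _ => by omega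
      _ = S + t * n := by rw [sum_add_distrib]; simp [hS, mul_comm]
  have h5R : (matWeight M : ℝ) ≤ S + t * n := by rw [hw]; exact_mod_cast h5
  nlinarith [mul_le_mul_of_nonneg_left h4 (by linarith : (0 : ℝ) ≤ t)]

/-- For the `r × t` all-one matrix `A_{r,t}` (with `r, t ≥ 1`) we have
`ex(n, A_{r,t}) ≤ C · n^(2 - 1/t)` for some constant `C` and all positive integers `n`. -/
theorem statement7 (r t : ℕ) (hr : 1 ≤ r) (ht : 1 ≤ t) :
    ∃ C : ℝ, 0 < C ∧ ∀ n : ℕ, 0 < n →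
      (matEx n (fun (_ : Fin r) (_ : Fin t) => true) : ℝ) ≤ C * (n : ℝ) ^ (2 - 1 / (t : ℝ)) := by
  refine ⟨r + t, by positivity, fun n hn => ?_⟩
  have hb : ∀ w ∈ {w : ℕ | ∃ M : Fin n → Fin n → Bool,
      ¬ matContains M (fun (_ : Fin r) (_ : Fin t) => true) ∧ matWeight M = w},
      w ≤ ⌊(r + t : ℝ) * (n : ℝ) ^ (2 - 1 / (t : ℝ))⌋₊ := by
    rintro w ⟨M, hM, rfl⟩
    exact Nat.le_floor (aux_main_s7 r t n hr ht hn M hM)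
  have hx : matEx n (fun (_ : Fin r) (_ : Fin t) => true) ≤
      ⌊(r + t : ℝ) * (n : ℝ) ^ (2 - 1 / (t : ℝ))⌋₊ := csSup_le' hb
  exact (Nat.le_floor_iff (by positivity)).1 hx
end

section
/- Let t ≥ 1 be an integer and let H be a bipartite graph with bipartition (X, Y) such that every vertex of X has degree at most t. Then there is a constant C (depending on H) such that for every positive integer n, ex(n, H) ≤ C · n^{2 − 1/t}. -/
/-- A graph `G` contains a graph `H` as a subgraph if there is an injective graph
homomorphism from `H` to `G`. -/
def graphContains {W : Type*} {n : ℕ} (G : SimpleGraph (Fin n)) (H : SimpleGraph W) : Prop :=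
  ∃ f : W → Fin n, Function.Injective f ∧ ∀ u v, H.Adj u v → G.Adj (f u) (f v)

/-- The (unordered) graph extremal number `ex(n, H)`: the maximum number of edges in a graph
on `n` vertices not containing `H` as a subgraph. -/
noncomputable def graphEx {W : Type*} (n : ℕ) (H : SimpleGraph W) : ℕ :=
  sSup {e : ℕ | ∃ G : SimpleGraph (Fin n), ¬ graphContains G H ∧ G.edgeSet.ncard = e}

open Finset in
open scoped Classical in
lemma drc_core {n : ℕ} (hn : 0 < n) (G : SimpleGraph (Fin n)) (m k t : ℕ) (ht : 1 ≤ t)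
    (h : (k ^ t + m) * n ^ t ≤ ∑ v, (G.degree v) ^ t) :
    ∃ A : Finset (Fin n), m ≤ A.card ∧ ∀ S : Fin t → Fin n, (∀ i, S i ∈ A) →
      k ≤ (univ.filter (fun v => ∀ i, G.Adj v (S i))).card := by
  set N : (Fin t → Fin n) → Finset (Fin n) :=
    fun S => univ.filter (fun v => ∀ i, G.Adj v (S i)) with hN
  let bad : Finset (Fin t → Fin n) := univ.filter (fun S => (N S).card < k)
  let B : (Fin t → Fin n) → Finset (Fin t → Fin n) :=
    fun T => bad.filter (fun S => ∀ i, S i ∈ N T)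
  have h1 : ∑ T, (N T).card = ∑ v, (G.degree v) ^ t := by
    have : ∀ v, (G.degree v) ^ t
        = (univ.filter (fun T : Fin t → Fin n => ∀ i, G.Adj v (T i))).card := by
      intro v
      have e : univ.filter (fun T : Fin t → Fin n => ∀ i, G.Adj v (T i))
          = Fintype.piFinset (fun _ => G.neighborFinset v) := by
        ext T; simp
      rw [e, Fintype.card_piFinset_const, G.card_neighborFinset_eq_degree]
    simp_rw [this, hN, card_filter]
    exact sum_comm
  have h2 : ∑ T, (B T).card ≤ k ^ t * n ^ t := by
    have : ∑ T, (B T).card = ∑ S ∈ bad, (N S).card ^ t := by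
      have : ∀ S, (N S).card ^ t
          = (univ.filter (fun T : Fin t → Fin n => ∀ i, S i ∈ N T)).card := by
        intro S
        have e : univ.filter (fun T : Fin t → Fin n => ∀ i, S i ∈ N T)
            = Fintype.piFinset (fun _ => N S) := by
          ext T
          simp only [hN, mem_filter, mem_univ, true_and, Fintype.mem_piFinset]
          exact ⟨fun h i j => (h j i).symm, fun h i j => (h j i).symm⟩
        rw [e, Fintype.card_piFinset_const]
      simp_rw [this, B, card_filter]
      exact sum_comm
    rw [this]
    calc ∑ S ∈ bad, (N S).card ^ t ≤ ∑ S ∈ bad, k ^ t := by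
          apply sum_le_sum
          intro S hS
          have : (N S).card < k := by simpa [bad] using hS
          exact Nat.pow_le_pow_left this.le t
      _ = bad.card * k ^ t := by simp
      _ ≤ n ^ t * k ^ t := by
          gcongr
          calc bad.card ≤ Fintype.card (Fin t → Fin n) := card_le_univ _
            _ = n ^ t := by simp
      _ = _ := mul_comm _ _
  obtain ⟨T, -, hT⟩ : ∃ T ∈ (univ : Finset (Fin t → Fin n)),
      m + (B T).card ≤ (N T).card := by
    apply exists_le_of_sum_le
    · exact ⟨fun _ => ⟨0, hn⟩, mem_univ _⟩
    · rw [h1, sum_add_distrib]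
      simp only [sum_const, card_univ, Fintype.card_fun, Fintype.card_fin, smul_eq_mul]
      nlinarith
  refine ⟨N T \ (B T).image (fun S => S ⟨0, ht⟩), ?_, ?_⟩
  · have a := le_card_sdiff ((B T).image (fun S => S ⟨0, ht⟩)) (N T)
    have b : ((B T).image (fun S => S ⟨0, ht⟩)).card ≤ (B T).card := card_image_le
    omega
  · intro S hS
    by_contra hlt
    have hb : S ∈ B T := by
      simp only [B, bad, mem_filter, mem_univ, true_and]
      exact ⟨not_le.mp hlt, fun i => (mem_sdiff.mp (hS i)).1⟩
    exact (mem_sdiff.mp (hS ⟨0, ht⟩)).2 (mem_image_of_mem (fun S => S ⟨0, ht⟩) hb)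

open Finset in
open scoped Classical in
lemma drc_embed {n : ℕ} (G : SimpleGraph (Fin n)) (t : ℕ) (W : Type*) [Fintype W]
    (H : SimpleGraph W) (X : Set W)
    (hbip : ∀ u v : W, H.Adj u v → (u ∈ X ↔ v ∉ X))
    (hdeg : ∀ u ∈ X, (H.neighborSet u).ncard ≤ t)
    (A : Finset (Fin n)) (hA : Fintype.card W ≤ A.card)
    (hS : ∀ S : Fin t → Fin n, (∀ i, S i ∈ A) →
      2 * Fintype.card W ≤ (univ.filter (fun v => ∀ i, G.Adj v (S i))).card) :
    graphContains G H := by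
  obtain ⟨f0⟩ : Nonempty (W ↪ A) := by
    apply Function.Embedding.nonempty_of_card_le
    simpa using hA
  let F : Finset (Fin n) := univ.image (fun w => (f0 w : Fin n))
  have hF : F.card ≤ Fintype.card W := card_image_le
  let L : X → Finset (Fin n) := fun x =>
    univ.filter (fun v => ∀ y, H.Adj x y → G.Adj v (f0 y)) \ F
  have hL : ∀ x, Fintype.card W ≤ (L x).card := by
    intro x
    obtain ⟨S, hSA, hSc⟩ : ∃ S : Fin t → Fin n, (∀ i, S i ∈ A) ∧
        ∀ y, H.Adj x y → ∃ i, S i = f0 y := by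
      have hc : Fintype.card (H.neighborSet x) ≤ Fintype.card (Fin t) := by
        have := hdeg x x.2
        rw [Set.ncard_eq_toFinset_card', Set.toFinset_card] at this
        simpa using this
      obtain ⟨e⟩ := Function.Embedding.nonempty_of_card_le hc
      refine ⟨fun i => if h : ∃ y, e y = i then f0 h.choose else f0 x, ?_, ?_⟩
      · intro i
        dsimp only
        split_ifs <;> exact Subtype.coe_prop _
      · intro y hy
        replace hy : y ∈ H.neighborSet x := hy
        refine ⟨e ⟨y, hy⟩, ?_⟩
        have h : ∃ z, e z = e ⟨y, hy⟩ := ⟨_, rfl⟩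
        dsimp only
        rw [dif_pos h, e.injective h.choose_spec]
    have h1 := hS S hSA
    have h2 : (univ.filter (fun v => ∀ i, G.Adj v (S i))).card ≤
        (univ.filter (fun v => ∀ y, H.Adj x y → G.Adj v (f0 y))).card := by
      apply card_le_card
      intro v hv
      simp only [mem_filter, mem_univ, true_and] at hv ⊢
      intro y hy
      obtain ⟨i, hi⟩ := hSc y hy
      rw [← hi]; exact hv i
    have h3 := le_card_sdiff F (univ.filter (fun v => ∀ y, H.Adj x y → G.Adj v (f0 y)))
    change _ ≤ (_ \ F).card
    omega
  obtain ⟨g, hg, hgL⟩ := (all_card_le_biUnion_card_iff_exists_injective L).mp (by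
    intro s
    rcases s.eq_empty_or_nonempty with rfl | ⟨x, hx⟩
    · simp
    · calc s.card ≤ Fintype.card X := card_le_univ _
        _ ≤ Fintype.card W := Fintype.card_subtype_le _
        _ ≤ (L x).card := hL x
        _ ≤ _ := card_le_card (subset_biUnion_of_mem L hx))
  have hgF : ∀ x w, g x ≠ f0 w := by
    intro x w h
    have := (mem_sdiff.mp (hgL x)).2
    exact this (h ▸ mem_image_of_mem _ (mem_univ w))
  have hgA : ∀ (x : X) y, H.Adj x y → G.Adj (g x) (f0 y) := by
    intro x
    have := (mem_sdiff.mp (hgL x)).1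
    simpa using this
  refine ⟨fun w => if h : w ∈ X then g ⟨w, h⟩ else f0 w, ?_, ?_⟩
  · intro a b hab
    dsimp only at hab
    split_ifs at hab with ha hb hb
    · simpa using hg hab
    · exact (hgF _ _ hab).elim
    · exact (hgF _ _ hab.symm).elim
    · exact f0.injective (Subtype.ext hab)
  · intro u v huv
    have := hbip u v huv
    by_cases hu : u ∈ X
    · have hv := this.mp hu
      simp only [hu, hv, dif_pos, dif_neg, not_false_eq_true]
      exact hgA ⟨u, hu⟩ v huv
    · have hv : v ∈ X := by tauto
      simp only [hu, hv, dif_pos, dif_neg, not_false_eq_true]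
      exact (hgA ⟨v, hv⟩ u huv.symm).symm

open Finset in
open scoped Classical in
lemma drc_edges {n : ℕ} (hn : 0 < n) (t : ℕ) (ht : 1 ≤ t) (W : Type*) [Fintype W]
    (H : SimpleGraph W) (X : Set W)
    (hbip : ∀ u v : W, H.Adj u v → (u ∈ X ↔ v ∉ X))
    (hdeg : ∀ u ∈ X, (H.neighborSet u).ncard ≤ t)
    (G : SimpleGraph (Fin n)) (hG : ¬ graphContains G H) :
    (G.edgeSet.ncard : ℝ) ≤ (2 * Fintype.card W + 1 : ℝ) * (n : ℝ) ^ (2 - 1 / (t : ℝ)) := by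
  by_contra hlt
  push Not at hlt
  apply hG
  set w := Fintype.card W with hw
  have hn' : (0 : ℝ) < n := by exact_mod_cast hn
  obtain ⟨A, hA, hS⟩ := drc_core hn G w (2 * w) t ht (by
    obtain ⟨s, rfl⟩ : ∃ s, t = s + 1 := ⟨t - 1, by omega⟩
    have hp := pow_sum_le_card_mul_sum_pow (s := (univ : Finset (Fin n)))
      (f := fun v => (G.degree v : ℝ)) (fun _ _ => Nat.cast_nonneg _) s
    have he : ∑ v, (G.degree v : ℝ) = 2 * (G.edgeSet.ncard : ℝ) := by
      have := G.sum_degrees_eq_twice_card_edges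
      rw [Set.ncard_eq_toFinset_card']
      exact_mod_cast this
    rw [he, card_univ, Fintype.card_fin] at hp
    have hr : ((n : ℝ) ^ (2 - 1 / ((s + 1 : ℕ) : ℝ))) ^ (s + 1) = (n : ℝ) ^ s * n ^ (s + 1) := by
      rw [← Real.rpow_natCast (n := s + 1), ← Real.rpow_mul hn'.le, ← pow_add,
        ← Real.rpow_natCast]
      congr 1
      push_cast
      field_simp
      ring
    have hq : ((4 * w + 2 : ℝ) * (n : ℝ) ^ (2 - 1 / ((s + 1 : ℕ) : ℝ))) ^ (s + 1)
        ≤ (2 * (G.edgeSet.ncard : ℝ)) ^ (s + 1) := by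
      apply pow_le_pow_left₀ (by positivity)
      linarith
    rw [mul_pow, hr] at hq
    have hc : ((2 * w : ℝ) ^ (s + 1) + w) ≤ (4 * w + 2) ^ (s + 1) := by
      have h1 : (2 * w : ℝ) ^ s ≤ (4 * w + 2) ^ s := by
        gcongr
        linarith [(Nat.cast_nonneg w : (0 : ℝ) ≤ w)]
      have h2 : (1 : ℝ) ≤ (4 * w + 2) ^ s := by
        apply one_le_pow₀
        linarith [(Nat.cast_nonneg w : (0 : ℝ) ≤ w)]
      have h0 : (0 : ℝ) ≤ w := Nat.cast_nonneg w
      rw [pow_succ, pow_succ]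
      nlinarith
    have h3 : (n : ℝ) ^ s * ((4 * w + 2 : ℝ) ^ (s + 1) * n ^ (s + 1))
        ≤ (n : ℝ) ^ s * ∑ v, (G.degree v : ℝ) ^ (s + 1) := by
      refine le_trans (le_of_eq (by ring)) (hq.trans hp)
    have h4 := le_of_mul_le_mul_left h3 (by positivity)
    have h5 : ((2 * w : ℝ) ^ (s + 1) + w) * n ^ (s + 1) ≤ ∑ v, (G.degree v : ℝ) ^ (s + 1) :=
      le_trans (by gcongr) h4
    exact_mod_cast h5)
  exact drc_embed G t W H X hbip hdeg A hA hS

/-- Let `H` be a (finite) bipartite graph with bipartition `(X, Y)` (every edge has exactly one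
endpoint in `X`) such that every vertex of `X` has degree at most `t ≥ 1`. Then
`ex(n, H) ≤ C · n^(2 - 1/t)` for some constant `C` and all positive integers `n`. -/
theorem statement8 (t : ℕ) (ht : 1 ≤ t) (W : Type*) [Fintype W]
    (H : SimpleGraph W) (X : Set W)
    (hbip : ∀ u v : W, H.Adj u v → (u ∈ X ↔ v ∉ X))
    (hdeg : ∀ u ∈ X, (H.neighborSet u).ncard ≤ t) :
    ∃ C : ℝ, 0 < C ∧ ∀ n : ℕ, 0 < n →
      (graphEx n H : ℝ) ≤ C * (n : ℝ) ^ (2 - 1 / (t : ℝ)) := by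
  refine ⟨2 * Fintype.card W + 1, by positivity, fun n hn => ?_⟩
  unfold graphEx
  rcases Set.eq_empty_or_nonempty
    {e : ℕ | ∃ G : SimpleGraph (Fin n), ¬ graphContains G H ∧ G.edgeSet.ncard = e} with he | he
  · rw [he]
    simp
    positivity
  · have hfin : Set.Finite
        {e : ℕ | ∃ G : SimpleGraph (Fin n), ¬ graphContains G H ∧ G.edgeSet.ncard = e} := by
      apply (Set.finite_range (fun G : SimpleGraph (Fin n) => G.edgeSet.ncard)).subset
      rintro e ⟨G, -, rfl⟩
      exact ⟨G, rfl⟩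
    obtain ⟨G, hG, hGe⟩ := Nat.sSup_mem he hfin.bddAbove
    rw [← hGe]
    exact drc_edges hn t ht W H X hbip hdeg G hG
end
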